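/- arXiv:math/9907213 — 2 statements merged into one kernel-verified Lean document; each statement's English description precedes it below -/
import Mathlib

section
/- Suppose M is a product of distinct monic irreducible polynomials of A, so that the orders of Λ_M and G(M) = Gal(k(Λ_M)/k) are relatively prime. Then H^2(G(M), Λ_M) = 0 and H^2(G(M), H_Γ(M)) is trivial (where G(M) acts on H_Γ(M) by conjugation); in particular, the exact sequence 1 → H_Γ(M) → G_Γ(M) → G(M) → 1 splits and G_Γ(M) is a semidirect product of H_Γ(M) by G(M). -/
open Polynomial IntermediateField

set_option synthInstance.maxHeartbeats 1000000
set_option maxHeartbeats 1000000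

/-- `ψ` is the Carlitz module: the ring homomorphism `A = 𝔽_q[T] → End_{𝔽_q}(k̄, +)`
determined by `T ↦ (α ↦ Tα + α^q)` and `c ↦ (α ↦ cα)` for constants `c ∈ 𝔽_q`. -/
def IsCarlitz {Fq : Type} [Field Fq] [Fintype Fq]
    (ψ : Polynomial Fq →+* AddMonoid.End (AlgebraicClosure (RatFunc Fq))) : Prop :=
  (∀ α, ψ X α = algebraMap (RatFunc Fq) (AlgebraicClosure (RatFunc Fq)) RatFunc.X * α
      + α ^ Fintype.card Fq) ∧
  (∀ (c : Fq) (α), ψ (C c) α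
      = algebraMap (RatFunc Fq) (AlgebraicClosure (RatFunc Fq)) (RatFunc.C c) * α)

/-- An automorphism `τ ∈ Gal(E/k)` fixes the `M`-torsion points `Λ_M` pointwise; when
`E ⊇ K = k(Λ_M)` this says exactly `τ ∈ Gal(E/K)`. -/
def FixesTorsion {Fq : Type} [Field Fq] [Fintype Fq]
    (ψ : Polynomial Fq →+* AddMonoid.End (AlgebraicClosure (RatFunc Fq)))
    (M : Polynomial Fq)
    {E : IntermediateField (RatFunc Fq) (AlgebraicClosure (RatFunc Fq))}
    (τ : ↥E ≃ₐ[RatFunc Fq] ↥E) : Prop :=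
  ∀ x : ↥E, ψ M (x : AlgebraicClosure (RatFunc Fq)) = 0 → τ x = x

/-- An automorphism `s ∈ Gal(E/k)` is an extension of `σ_B ∈ Gal(K/k)`, i.e. it acts on
the `M`-torsion points `Λ_M ⊆ E` by `λ ↦ λ^B`. -/
def ExtendsSigma {Fq : Type} [Field Fq] [Fintype Fq]
    (ψ : Polynomial Fq →+* AddMonoid.End (AlgebraicClosure (RatFunc Fq)))
    (M : Polynomial Fq)
    {E : IntermediateField (RatFunc Fq) (AlgebraicClosure (RatFunc Fq))}
    (s : ↥E ≃ₐ[RatFunc Fq] ↥E) (B : Polynomial Fq) : Prop :=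
  ∀ x : ↥E, ψ M (x : AlgebraicClosure (RatFunc Fq)) = 0 →
    ((s x : AlgebraicClosure (RatFunc Fq))) = ψ B (x : AlgebraicClosure (RatFunc Fq))

/-- `c` is the natural `A`-action on `Gal(E/K)`, defined via decompositions: for
`f ≡ f_1 + ⋯ + f_n (mod M)` with all `gcd(f_i, M) = 1` and extensions `s_i` of
`σ_{f_i}`, one has `c f τ = Σ_i s_i ∘ τ ∘ s_i⁻¹`. -/
def IsDecompConjAction {Fq : Type} [Field Fq] [Fintype Fq]
    (ψ : Polynomial Fq →+* AddMonoid.End (AlgebraicClosure (RatFunc Fq)))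
    (M : Polynomial Fq)
    {E : IntermediateField (RatFunc Fq) (AlgebraicClosure (RatFunc Fq))}
    (c : Polynomial Fq → (↥E ≃ₐ[RatFunc Fq] ↥E) → (↥E ≃ₐ[RatFunc Fq] ↥E)) : Prop :=
  ∀ (f : Polynomial Fq) (τ : ↥E ≃ₐ[RatFunc Fq] ↥E), FixesTorsion ψ M τ →
    ∀ (n : ℕ) (g : Fin n → Polynomial Fq), (∀ i, IsCoprime (g i) M) →
      M ∣ (f - ∑ i, g i) →
      ∀ s : Fin n → (↥E ≃ₐ[RatFunc Fq] ↥E), (∀ i, ExtendsSigma ψ M (s i) (g i)) →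
        c f τ = (List.ofFn (fun i => s i * τ * (s i)⁻¹)).prod

/-!
Let `p` be the characteristic of `𝔽_q`. Both `Λ_M` and `H_Γ(M)` are abelian groups killed by `p`:
for `x ∈ (1/M)Γ` and `τ ∈ G_Γ(M)` the difference `τ x - x` lies in `Λ_M`, so it is fixed by
`H_Γ(M)`; hence `τ ∈ H_Γ(M)` acts on `(1/M)Γ` by translations by elements of `Λ_M`.

On the other hand `p` does not divide the order of `G(M)`. Suppose `σ ∈ G(M)` satisfies `σ ^ p = 1`.
Let `x ∈ Λ_M` have annihilator `(D)`. Since `α ↦ α^D` is a polynomial of degree `q ^ deg D`, the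
cyclic module `A x ≃ A / (D)` is all of `Λ_D`, so that `σ x = x^B` for some `B ∈ A`. Then
`(B - 1) ^ p = B ^ p - 1` kills `x`, and so does `B - 1` because `D ∣ M` is squarefree. Thus `σ` is
trivial on `Λ_M`, i.e. `σ = 1`.

Summing the cocycle identity `σ u(τ, ρ) + u(σ, τρ) = u(σ, τ) + u(στ, ρ)` over `ρ` shows that
`|G(M)| u` is a coboundary, and `|G(M)|` is invertible modulo `p`. The splitting is the vanishing of
the class of the factor set of a set-theoretic section.
-/

section CoprimeCohomology

open groupCohomology

variable {G : Type*} [Group G] [Finite G] {n : ℕ}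

theorem isCoboundary₂_of_coprime_card {V : Type*} [AddCommGroup V] [DistribSMul G V]
    (hn : ∀ x : V, n • x = 0) (hcop : (Nat.card G).Coprime n) {u : G × G → V}
    (hu : IsCocycle₂ u) : IsCoboundary₂ u := by
  cases nonempty_fintype G
  let S (σ : G) : V := ∑ ρ, u (σ, ρ)
  have hS (σ τ : G) : S (σ * τ) + Nat.card G • u (σ, τ) = σ • S τ + S σ := by
    have h := Finset.sum_congr rfl fun ρ (_ : ρ ∈ Finset.univ) ↦ hu σ τ ρ
    rw [Finset.sum_add_distrib, Finset.sum_add_distrib, ← Finset.smul_sum, Finset.sum_const,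
      Finset.card_univ, ← Nat.card_eq_fintype_card] at h
    exact h.trans <| congrArg _ <| Equiv.sum_comp (Equiv.mulLeft τ) fun ρ ↦ u (σ, ρ)
  obtain ⟨m, hm⟩ : ∃ m : ℤ, ∀ x : V, m • Nat.card G • x = x := by
    refine ⟨(Nat.card G).gcdA n, fun x ↦ ?_⟩
    have bezout : (1 : ℤ) = Nat.card G * (Nat.card G).gcdA n + n * (Nat.card G).gcdB n := by
      rw [← Nat.gcd_eq_gcd_ab, hcop.gcd_eq_one, Nat.cast_one]
    rw [← natCast_zsmul, ← mul_zsmul', eq_sub_of_add_eq bezout.symm, sub_smul, one_zsmul,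
      mul_zsmul', natCast_zsmul, hn, zsmul_zero, sub_zero]
  refine ⟨fun σ ↦ m • S σ, fun σ τ ↦ ?_⟩
  calc σ • m • S τ - m • S (σ * τ) + m • S σ
      = m • (σ • S τ + S σ - S (σ * τ)) := by
        rw [← DistribSMul.toAddMonoidHom_apply, map_zsmul, DistribSMul.toAddMonoidHom_apply,
          smul_sub, smul_add, sub_add_eq_add_sub]
    _ = m • Nat.card G • u (σ, τ) := by rw [← hS, add_sub_cancel_left]
    _ = u (σ, τ) := hm _

theorem exists_coboundary_mem_addSubgroup {W : Type*} [AddCommGroup W] [DistribSMul G W]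
    {V : AddSubgroup W} (hV : ∀ (σ : G), ∀ x ∈ V, σ • x ∈ V) (hn : ∀ x ∈ V, n • x = 0)
    (hcop : (Nat.card G).Coprime n) {u : G → G → W} (huV : ∀ σ τ, u σ τ ∈ V)
    (hu : ∀ σ τ ρ, σ • u τ ρ + u σ (τ * ρ) = u σ τ + u (σ * τ) ρ) :
    ∃ v : G → W, (∀ σ, v σ ∈ V) ∧ ∀ σ τ, u σ τ = σ • v τ - v (σ * τ) + v σ := by
  let : DistribSMul G V :=
    { smul σ x := ⟨σ • x.1, hV σ x x.2⟩
      smul_zero _ := Subtype.ext (smul_zero _)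
      smul_add _ _ _ := Subtype.ext (smul_add _ _ _) }
  have hu' : IsCocycle₂ fun p : G × G ↦ (⟨u p.1 p.2, huV _ _⟩ : V) := fun σ τ ρ ↦
    Subtype.ext ((add_comm _ _).trans (hu σ τ ρ).symm)
  obtain ⟨v, hv⟩ := isCoboundary₂_of_coprime_card (fun x : V ↦ Subtype.ext (hn x x.2)) hcop hu'
  exact ⟨fun σ ↦ v σ, fun σ ↦ (v σ).2, fun σ τ ↦ (congrArg Subtype.val (hv σ τ)).symm⟩

open scoped IsMulCommutative in
theorem exists_coboundary_mem_subgroup {Q : Type*} [Group Q] {N : Subgroup Q} [N.Normal]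
    [IsMulCommutative N] (hn : ∀ τ ∈ N, τ ^ n = 1) (hcop : (Nat.card G).Coprime n)
    {act : G → Q → Q} (hact : ∀ σ, ∃ g, ∀ τ ∈ N, act σ τ = g * τ * g⁻¹)
    {u : G → G → Q} (huN : ∀ σ τ, u σ τ ∈ N)
    (hu : ∀ σ τ ρ, act σ (u τ ρ) * u σ (τ * ρ) = u σ τ * u (σ * τ) ρ) :
    ∃ v : G → Q, (∀ σ, v σ ∈ N) ∧ ∀ σ τ, u σ τ = act σ (v τ) * (v (σ * τ))⁻¹ * v σ := by
  choose g hg using hact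
  let : DistribSMul G (Additive N) :=
    { smul σ τ := .ofMul (MulAut.conjNormal (g σ) τ.toMul)
      smul_zero _ := map_one (MulAut.conjNormal _)
      smul_add _ _ _ := map_mul (MulAut.conjNormal _) _ _ }
  have hsmul (σ : G) (τ : N) : act σ τ = (σ • Additive.ofMul τ).toMul := hg σ τ τ.2
  have hu' : IsCocycle₂ fun p : G × G ↦ Additive.ofMul (⟨u p.1 p.2, huN _ _⟩ : N) := by
    refine fun σ τ ρ ↦ (add_comm _ _).trans (Subtype.ext ((hu σ τ ρ).symm.trans ?_))
    exact congrArg (· * u σ (τ * ρ)) (hsmul σ ⟨_, huN τ ρ⟩)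
  obtain ⟨v, hv⟩ := isCoboundary₂_of_coprime_card
    (fun τ : Additive N ↦ Subtype.ext (hn _ τ.toMul.2)) hcop hu'
  refine ⟨fun σ ↦ (v σ).toMul, fun σ ↦ (v σ).toMul.2, fun σ τ ↦ ?_⟩
  rw [hsmul, ofMul_toMul, ← div_eq_mul_inv]
  exact (congrArg Subtype.val (hv σ τ)).symm

end CoprimeCohomology

section SplitExtension

variable {G Q : Type*} [Group G] [Group Q] {π : Q →* G}

theorem exists_rightInverse_of_coprime_card [Finite G] [IsMulCommutative π.ker]
    (hπ : Function.Surjective π) {n : ℕ} (hn : ∀ τ ∈ π.ker, τ ^ n = 1)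
    (hcop : (Nat.card G).Coprime n) : ∃ s : G →* Q, Function.RightInverse s π := by
  -- Write the factor set `u` of `t` as the coboundary of `v`; then `σ ↦ (v σ)⁻¹ * t σ` is a
  -- homomorphism.
  obtain ⟨t, hπt⟩ := hπ.hasRightInverse
  let u (σ τ : G) : Q := t σ * t τ * (t (σ * τ))⁻¹
  obtain ⟨v, hv_ker, hv⟩ : ∃ v : G → Q, (∀ σ, v σ ∈ π.ker) ∧
      ∀ σ τ, u σ τ = t σ * v τ * (t σ)⁻¹ * (v (σ * τ))⁻¹ * v σ :=
    exists_coboundary_mem_subgroup hn hcop (fun σ ↦ ⟨t σ, fun _ _ ↦ rfl⟩)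
      (fun σ τ ↦ by simp [u, MonoidHom.mem_ker, hπt _])
      (fun σ τ ρ ↦ by simp only [u, mul_assoc, inv_mul_cancel_left])
  have hmul (σ τ : G) : (v (σ * τ))⁻¹ * t (σ * τ) = (v σ)⁻¹ * t σ * ((v τ)⁻¹ * t τ) := by
    calc (v (σ * τ))⁻¹ * t (σ * τ)
        = (v σ)⁻¹ * ((v (σ * τ))⁻¹ * v σ) * t (σ * τ) := by
          rw [setLike_mul_comm (inv_mem (hv_ker _)) (hv_ker _), inv_mul_cancel_left]
      _ = (v σ)⁻¹ * t σ * (v τ)⁻¹ * (t σ)⁻¹ * (u σ τ * t (σ * τ)) := by rw [hv]; group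
      _ = (v σ)⁻¹ * t σ * ((v τ)⁻¹ * t τ) := by simp only [u]; group
  exact ⟨MonoidHom.mk' (fun σ ↦ (v σ)⁻¹ * t σ) hmul, fun σ ↦ by
    simpa [hπt σ] using hv_ker σ⟩

theorem existsUnique_mul_of_rightInverse {s : G → Q} (hs : Function.RightInverse s π) (g : Q) :
    ∃! p : Q × G, p.1 ∈ π.ker ∧ g = p.1 * s p.2 := by
  refine ⟨(g * (s (π g))⁻¹, π g), ⟨by simp [MonoidHom.mem_ker, hs _], by simp⟩, ?_⟩
  rintro ⟨τ, σ⟩ ⟨hτ, rfl⟩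
  have hσ : π (τ * s σ) = σ := by rw [map_mul, hτ, one_mul, hs]
  simp [hσ]

end SplitExtension

section DisplacementCommute

variable {G V : Type*} [Group G] [AddCommGroup V] [DistribMulAction G V] {a b : G} {x : V}

theorem mul_smul_comm_of_smul_sub_eq (hab : a • (b • x - x) = b • x - x)
    (hba : b • (a • x - x) = a • x - x) : (a * b) • x = (b * a) • x := by
  rw [smul_sub] at hab hba
  rw [mul_smul, mul_smul, eq_add_of_sub_eq hab, eq_add_of_sub_eq hba]
  abel

theorem pow_smul_of_smul_sub_eq (h : a • (a • x - x) = a • x - x) (n : ℕ) :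
    a ^ n • x = x + n • (a • x - x) := by
  induction n with
  | zero => simp
  | succ n ih =>
    rw [pow_succ', mul_smul, ih, smul_add, smul_comm a n, h, succ_nsmul]
    abel

end DisplacementCommute

section RestrictNormal

variable {F L : Type*} [Field F] [Field L] [Algebra F L] {K E : IntermediateField F L}

theorem algEquiv_ext_of_eq_adjoin {S : Set L} (hE : E = adjoin F S) {σ τ : Gal(E/F)}
    (h : ∀ x : E, (x : L) ∈ S → σ x = τ x) : σ = τ :=
  AlgEquiv.coe_toAlgHom_injective <| algHom_ext_of_eq_adjoin F hE fun _ hx ↦ h _ hx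

/-- The restriction homomorphism `Gal(E/F) → Gal(K/F)` for intermediate fields `K ≤ E` with `K/F`
normal. It is `AlgEquiv.restrictNormalHom` for the algebra structure on `E` over `K` given by the
inclusion. -/
noncomputable def restrictNormalHomOfLE (h : K ≤ E) [Normal F K] : Gal(E/F) →* Gal(K/F) :=
  letI := (inclusion h).toAlgebra
  haveI : IsScalarTower F K E := .of_algebraMap_eq fun _ ↦ rfl
  AlgEquiv.restrictNormalHom K

variable (h : K ≤ E) [Normal F K]

theorem restrictNormalHomOfLE_apply_coe (g : Gal(E/F)) (x : K) :
    (restrictNormalHomOfLE h g x : L) = g (inclusion h x) := by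
  let := (inclusion h).toAlgebra
  have : IsScalarTower F K E := .of_algebraMap_eq fun _ ↦ rfl
  exact congrArg Subtype.val (AlgEquiv.restrictNormal_commutes g K x)

theorem restrictNormalHomOfLE_surjective [Normal F E] :
    Function.Surjective (restrictNormalHomOfLE h) := by
  let := (inclusion h).toAlgebra
  have : IsScalarTower F K E := .of_algebraMap_eq fun _ ↦ rfl
  exact AlgEquiv.restrictNormalHom_surjective E

theorem restrictNormalHomOfLE_eq_iff {g : Gal(E/F)} {σ : Gal(K/F)} :
    restrictNormalHomOfLE h g = σ ↔
      ∀ (x : L) (hx : x ∈ K) (hx' : x ∈ E), (g ⟨x, hx'⟩ : L) = σ ⟨x, hx⟩ := by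
  simp only [AlgEquiv.ext_iff, Subtype.ext_iff, restrictNormalHomOfLE_apply_coe]
  exact ⟨fun hg x hx _ ↦ hg ⟨x, hx⟩, fun hg x ↦ hg x x.2 (h x.2)⟩

theorem mem_ker_restrictNormalHomOfLE_iff {S : Set L} (hK : K = adjoin F S) {g : Gal(E/F)} :
    g ∈ (restrictNormalHomOfLE h).ker ↔ ∀ x : E, (x : L) ∈ S → g x = x := by
  have hSK : S ⊆ K := hK ▸ subset_adjoin F S
  rw [MonoidHom.mem_ker, restrictNormalHomOfLE_eq_iff]
  refine ⟨fun hg x hx ↦ Subtype.ext (hg x (hSK hx) x.2), fun hg x hx _ ↦ ?_⟩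
  have hcomp : (g : E →ₐ[F] E).comp (inclusion h) = inclusion h :=
    algHom_ext_of_eq_adjoin F hK fun y hy ↦ hg _ hy
  exact congrArg Subtype.val (DFunLike.congr_fun hcomp ⟨x, hx⟩)

end RestrictNormal

section EquivariantEndomorphism

variable {F L : Type*} [Field F] [Field L] [Algebra F L] [Normal F L] {Φ : AddMonoid.End L}
  {Γ : Set L} {K E : IntermediateField F L}

theorem normal_adjoin_preimage (hΦ : ∀ (σ : Gal(L/F)) (x : L), Φ (σ x) = σ (Φ x))
    (hΓ : Γ ⊆ Set.range (algebraMap F L)) : Normal F (adjoin F {x | Φ x ∈ Γ}) := by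
  refine normal_iff_forall_map_le'.mpr fun σ ↦ ?_
  rw [adjoin_map]
  refine adjoin.mono _ _ _ ?_
  rintro _ ⟨x, hx, rfl⟩
  obtain ⟨c, hc⟩ := hΓ hx
  change Φ (σ x) ∈ Γ
  rwa [hΦ, ← hc, AlgEquiv.commutes, hc]

theorem normal_adjoin_ker (hΦ : ∀ (σ : Gal(L/F)) (x : L), Φ (σ x) = σ (Φ x)) :
    Normal F (adjoin F {x | Φ x = 0}) :=
  normal_adjoin_preimage (Γ := {0}) hΦ (Set.singleton_subset_iff.mpr ⟨0, map_zero _⟩)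

theorem map_algEquiv_apply_of_mem_range (hΦ : ∀ (σ : Gal(L/F)) (x : L), Φ (σ x) = σ (Φ x))
    (g : Gal(E/F)) {x : E} (hx : Φ x ∈ Set.range (algebraMap F L)) : Φ (g x) = Φ x := by
  obtain ⟨c, hc⟩ := hx
  have hg : g.liftNormal L x = g x := g.liftNormal_commutes L x
  rw [← hg, hΦ, ← hc, AlgEquiv.commutes]

theorem exists_coboundary_mem_ker (hΦ : ∀ (σ : Gal(L/F)) (x : L), Φ (σ x) = σ (Φ x))
    [Finite Gal(K/F)] (p : ℕ) [CharP F p] (hcop : (Nat.card Gal(K/F)).Coprime p)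
    {u : Gal(K/F) → Gal(K/F) → K} (huΦ : ∀ σ τ, Φ (u σ τ) = 0)
    (hu : ∀ σ τ ρ, σ (u τ ρ) + u σ (τ * ρ) = u σ τ + u (σ * τ) ρ) :
    ∃ v : Gal(K/F) → K, (∀ σ, Φ (v σ) = 0) ∧ ∀ σ τ, u σ τ = σ (v τ) - v (σ * τ) + v σ := by
  have : CharP K p := charP_of_injective_algebraMap (algebraMap F K).injective p
  let V : AddSubgroup K := (AddMonoidHom.ker Φ).comap K.val
  refine exists_coboundary_mem_addSubgroup (V := V) (fun σ x (hx : Φ x = 0) ↦ ?_) ?_ hcop huΦ hu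
  · exact (map_algEquiv_apply_of_mem_range hΦ σ ⟨0, by rw [hx, map_zero]⟩).trans hx
  · exact fun x _ ↦ by rw [nsmul_eq_mul, CharP.cast_eq_zero, zero_mul]

theorem smul_sub_eq_of_mem_ker (hΦ : ∀ (σ : Gal(L/F)) (x : L), Φ (σ x) = σ (Φ x))
    (hK : K = adjoin F {x | Φ x = 0}) (hKE : K ≤ E) [Normal F K] {σ : Gal(E/F)}
    (hσ : σ ∈ (restrictNormalHomOfLE hKE).ker) (τ : Gal(E/F)) {x : E}
    (hx : Φ x ∈ Set.range (algebraMap F L)) : σ • (τ • x - x) = τ • x - x := by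
  refine (mem_ker_restrictNormalHomOfLE_iff hKE hK).mp hσ _ ?_
  change Φ (τ x - x : L) = 0
  rw [map_sub, map_algEquiv_apply_of_mem_range hΦ τ hx, sub_self]

theorem isMulCommutative_ker_restrictNormalHomOfLE
    (hΦ : ∀ (σ : Gal(L/F)) (x : L), Φ (σ x) = σ (Φ x)) (hΓ : Γ ⊆ Set.range (algebraMap F L))
    (hK : K = adjoin F {x | Φ x = 0}) (hE : E = adjoin F {x | Φ x ∈ Γ}) (hKE : K ≤ E)
    [Normal F K] : IsMulCommutative (restrictNormalHomOfLE hKE).ker := by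
  refine .of_setLike_mul_comm fun σ hσ τ hτ ↦ algEquiv_ext_of_eq_adjoin hE fun x hx ↦ ?_
  exact mul_smul_comm_of_smul_sub_eq (smul_sub_eq_of_mem_ker hΦ hK hKE hσ τ (hΓ hx))
    (smul_sub_eq_of_mem_ker hΦ hK hKE hτ σ (hΓ hx))

theorem pow_char_eq_one_of_mem_ker (hΦ : ∀ (σ : Gal(L/F)) (x : L), Φ (σ x) = σ (Φ x))
    (hΓ : Γ ⊆ Set.range (algebraMap F L)) (hK : K = adjoin F {x | Φ x = 0})
    (hE : E = adjoin F {x | Φ x ∈ Γ}) (hKE : K ≤ E) [Normal F K] (p : ℕ) [CharP F p]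
    {τ : Gal(E/F)} (hτ : τ ∈ (restrictNormalHomOfLE hKE).ker) : τ ^ p = 1 := by
  have : CharP E p := charP_of_injective_algebraMap (algebraMap F E).injective p
  refine algEquiv_ext_of_eq_adjoin hE fun x hx ↦ ?_
  calc (τ ^ p) x = x + p • (τ x - x) :=
        pow_smul_of_smul_sub_eq (smul_sub_eq_of_mem_ker hΦ hK hKE hτ τ (hΓ hx)) p
    _ = x := by rw [nsmul_eq_mul, CharP.cast_eq_zero, zero_mul, add_zero]

end EquivariantEndomorphism

section TorsionOf

theorem isRadical_torsionOf_of_squarefree {R V : Type*} [CommRing R] [IsDomain R]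
    [IsPrincipalIdealRing R] [AddCommGroup V] [Module R V] {M : R} (hM : Squarefree M) {x : V}
    (hx : M • x = 0) : (Ideal.torsionOf R V x).IsRadical := by
  obtain ⟨D, hD⟩ := IsPrincipalIdealRing.principal (Ideal.torsionOf R V x)
  have hDM : D ∣ M := by
    rwa [← Ideal.mem_span_singleton, Ideal.span, ← hD, Ideal.mem_torsionOf_iff]
  rw [hD]
  exact isRadical_iff_span_singleton.mp (hM.squarefree_of_dvd hDM).isRadical

theorem apply_eq_self_of_pow_char_apply_eq_self {R V : Type*} [CommRing R] [AddCommGroup V]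
    [Module R V] (p : ℕ) [Fact p.Prime] [CharP R p] {σ : V →ₗ[R] V} {x : V}
    (hx : (Ideal.torsionOf R V x).IsRadical) (hσx : σ x ∈ Submodule.span R {x})
    (hpow : (σ ^ p) x = x) : σ x = x := by
  obtain ⟨B, hB⟩ := Submodule.mem_span_singleton.mp hσx
  have hσpow (n : ℕ) : (σ ^ n) x = B ^ n • x := by
    induction n with
    | zero => simp
    | succ n ih => rw [pow_succ', Module.End.mul_apply, ih, map_smul, ← hB, smul_smul, pow_succ]
  have hmem : (B - 1) ^ p ∈ Ideal.torsionOf R V x := by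
    rw [sub_pow_char, one_pow, Ideal.mem_torsionOf_iff, sub_smul, one_smul, ← hσpow, hpow, sub_self]
  have h := hx.radical_le_iff.mpr le_rfl ⟨p, hmem⟩
  rwa [Ideal.mem_torsionOf_iff, sub_smul, one_smul, hB, sub_eq_zero] at h

-- `F[X] ∙ x ≃ F[X] ⧸ (D)` already has the maximal possible number of `D`-torsion points.
theorem span_singleton_eq_torsionBy {F V : Type*} [Field F] [Finite F] [AddCommGroup V]
    [Module F[X] V] {D : F[X]} (hD : D ≠ 0)
    (hcard : {y : V | D • y = 0}.encard ≤ (Nat.card F ^ D.natDegree : ℕ)) {x : V}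
    (hx : Ideal.torsionOf F[X] V x = Ideal.span {D}) :
    Submodule.span F[X] {x} = Submodule.torsionBy F[X] V D := by
  have hDx : D • x = 0 := by
    rw [← Ideal.mem_torsionOf_iff, hx]
    exact Ideal.mem_span_singleton_self D
  have hle : Submodule.span F[X] {x} ≤ Submodule.torsionBy F[X] V D := by
    rwa [Submodule.span_singleton_le_iff_mem, Submodule.mem_torsionBy_iff]
  obtain ⟨hfin, hncard⟩ := Set.encard_le_coe_iff_finite_ncard_le.mp hcard
  have hspan : (Submodule.span F[X] {x} : Set V).ncard = Nat.card F ^ D.natDegree := by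
    have : Module.Finite F (F[X] ⧸ Ideal.span {D}) := (AdjoinRoot.powerBasis hD).finite
    rw [← Nat.card_coe_set_eq, SetLike.coe_sort_coe,
      ← Nat.card_congr (Ideal.quotTorsionOfEquivSpanSingleton F[X] V x).toEquiv, hx,
      Module.natCard_eq_pow_finrank (K := F), finrank_quotient_span_eq_natDegree]
  exact SetLike.coe_injective (Set.eq_of_subset_of_ncard_le hle (hspan ▸ hncard) hfin)

theorem apply_eq_self_of_encard_torsion_le {F V : Type*} [Field F] [Finite F] [AddCommGroup V]
    [Module F[X] V]
    (hcard : ∀ D : F[X], D ≠ 0 → {y : V | D • y = 0}.encard ≤ (Nat.card F ^ D.natDegree : ℕ))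
    (p : ℕ) [Fact p.Prime] [CharP F p] {M : F[X]} (hM : Squarefree M) {σ : V →ₗ[F[X]] V} {x : V}
    (hx : M • x = 0) (hpow : (σ ^ p) x = x) : σ x = x := by
  obtain ⟨D, hD⟩ := IsPrincipalIdealRing.principal (Ideal.torsionOf F[X] V x)
  have hD0 : D ≠ 0 := by
    rintro rfl
    have hM0 : M ∈ Ideal.torsionOf F[X] V x := hx
    rw [hD, Submodule.span_zero_singleton, Submodule.mem_bot] at hM0
    exact hM.ne_zero hM0
  have hspan := span_singleton_eq_torsionBy hD0 (hcard D hD0) hD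
  have hDx : D • x = 0 :=
    (Submodule.mem_torsionBy_iff D x).mp (hspan ▸ Submodule.mem_span_singleton_self x)
  refine apply_eq_self_of_pow_char_apply_eq_self p (isRadical_torsionOf_of_squarefree hM hx) ?_ hpow
  rw [hspan, Submodule.mem_torsionBy_iff, ← map_smul, hDx, map_zero]

end TorsionOf

namespace IsCarlitz

variable {Fq : Type} [Field Fq] [Fintype Fq]
  {ψ : Fq[X] →+* AddMonoid.End (AlgebraicClosure (RatFunc Fq))} {M : Fq[X]}

theorem apply_algEquiv (hψ : IsCarlitz ψ) (f : Fq[X])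
    (σ : Gal(AlgebraicClosure (RatFunc Fq)/RatFunc Fq)) (α : AlgebraicClosure (RatFunc Fq)) :
    ψ f (σ α) = σ (ψ f α) := by
  have hX (β : AlgebraicClosure (RatFunc Fq)) : ψ X (σ β) = σ (ψ X β) := by
    simp only [hψ.1, map_add, map_mul, map_pow, AlgEquiv.commutes]
  induction f using Polynomial.induction_on generalizing α with
  | C c => simp only [hψ.2, map_mul, AlgEquiv.commutes]
  | add f g hf hg =>
    rw [map_add]
    exact (congrArg₂ (· + ·) (hf α) (hg α)).trans (map_add σ _ _).symm
  | monomial n c h =>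
    simp only [pow_succ, ← mul_assoc, map_mul _ _ X, AddMonoid.End.coe_mul, Function.comp_apply,
      hX, h]

theorem exists_natDegree_eq_and_eval_eq (hψ : IsCarlitz ψ) {f : Fq[X]} (hf : f ≠ 0) :
    ∃ P : (AlgebraicClosure (RatFunc Fq))[X],
      P.natDegree = Fintype.card Fq ^ f.natDegree ∧ ∀ α, ψ f α = P.eval α := by
  have hq : 1 < Fintype.card Fq := Fintype.one_lt_card
  induction hd : f.natDegree generalizing f with
  | zero =>
    obtain ⟨c, rfl⟩ := natDegree_eq_zero.mp hd
    refine ⟨C (algebraMap _ _ (RatFunc.C c)) * X, ?_, fun α ↦ by simp [hψ.2]⟩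
    rw [natDegree_C_mul_X _ (by simpa using hf), pow_zero]
  | succ d ih =>
    have hd' : f.divX.natDegree = d := by rw [natDegree_divX_eq_natDegree_tsub_one, hd]; rfl
    have hf' : f.divX ≠ 0 := fun h ↦ by
      rw [divX_eq_zero_iff.mp h, natDegree_C] at hd
      exact d.succ_ne_zero hd.symm
    obtain ⟨P, hPdeg, hP⟩ := ih hf' hd'
    let Q : (AlgebraicClosure (RatFunc Fq))[X] :=
      X ^ Fintype.card Fq + C (algebraMap (RatFunc Fq) _ RatFunc.X) * X
    have hlin (c : AlgebraicClosure (RatFunc Fq)) : (C c * X).natDegree ≤ 1 :=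
      (natDegree_C_mul_le _ _).trans natDegree_X_le
    have hQdeg : Q.natDegree = Fintype.card Fq := by
      rw [natDegree_add_eq_left_of_natDegree_lt, natDegree_X_pow]
      rw [natDegree_X_pow]
      exact (hlin _).trans_lt hq
    have hcomp : (P.comp Q).natDegree = Fintype.card Fq ^ (d + 1) := by
      rw [natDegree_comp, hPdeg, hQdeg, pow_succ]
    refine ⟨P.comp Q + C (algebraMap _ _ (RatFunc.C (f.coeff 0))) * X, ?_, fun α ↦ ?_⟩
    · rw [natDegree_add_eq_left_of_natDegree_lt, hcomp]
      rw [hcomp]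
      exact (hlin _).trans_lt (Nat.one_lt_pow d.succ_ne_zero hq)
    · calc ψ f α = ψ f.divX (ψ X α) + ψ (C (f.coeff 0)) α := by
            conv_lhs => rw [← divX_mul_X_add f, map_add, map_mul]
            rfl
        _ = _ := by simp [Q, hψ.1, hψ.2, hP, add_comm]

theorem encard_torsion_le (hψ : IsCarlitz ψ) {f : Fq[X]} (hf : f ≠ 0) :
    {α | ψ f α = 0}.encard ≤ (Nat.card Fq ^ f.natDegree : ℕ) := by
  classical
  obtain ⟨P, hPdeg, hP⟩ := hψ.exists_natDegree_eq_and_eval_eq hf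
  have hP0 : P ≠ 0 := ne_zero_of_natDegree_gt (n := 0) (hPdeg ▸ pow_pos Fintype.card_pos _)
  have htorsion : {α | ψ f α = 0} = (P.roots.toFinset : Set _) := by
    ext α
    simp [hP0, hP]
  rw [htorsion, Set.encard_coe_eq_coe_finsetCard, Nat.card_eq_fintype_card, ← hPdeg]
  exact_mod_cast P.roots.toFinset_card_le.trans P.card_roots'

theorem algEquiv_apply_eq_self (hψ : IsCarlitz ψ) (p : ℕ) [Fact p.Prime] [CharP Fq p]
    (hM : Squarefree M) {σ : Gal(AlgebraicClosure (RatFunc Fq)/RatFunc Fq)}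
    {α : AlgebraicClosure (RatFunc Fq)} (hα : ψ M α = 0) (hpow : (σ ^ p) α = α) : σ α = α := by
  let : Module Fq[X] (AlgebraicClosure (RatFunc Fq)) := Module.compHom _ ψ
  let φ : AlgebraicClosure (RatFunc Fq) →ₗ[Fq[X]] AlgebraicClosure (RatFunc Fq) :=
    { toFun := σ
      map_add' := map_add σ
      map_smul' f β := (hψ.apply_algEquiv f σ β).symm }
  have hφpow : (φ ^ p) α = (σ ^ p) α := by
    rw [Module.End.coe_pow, AlgEquiv.coe_pow]
    rfl
  exact apply_eq_self_of_encard_torsion_le (fun _ ↦ hψ.encard_torsion_le) p hM hα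
    (σ := φ) (hφpow.trans hpow)

theorem finiteDimensional_adjoin_torsion (hψ : IsCarlitz ψ) (hM : M ≠ 0) :
    FiniteDimensional (RatFunc Fq) (adjoin (RatFunc Fq) {α | ψ M α = 0}) := by
  have : Finite {α | ψ M α = 0} := Set.finite_of_encard_le_coe (hψ.encard_torsion_le hM)
  exact finiteDimensional_adjoin fun α _ ↦ Algebra.IsIntegral.isIntegral α

theorem coprime_card_gal_adjoin_torsion (hψ : IsCarlitz ψ) (hM : Squarefree M) (p : ℕ)
    [Fact p.Prime] [CharP Fq p] :
    (Nat.card Gal(adjoin (RatFunc Fq) {α | ψ M α = 0}/RatFunc Fq)).Coprime p := by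
  have := hψ.finiteDimensional_adjoin_torsion hM.ne_zero
  refine (((Fact.out : p.Prime).coprime_iff_not_dvd).mpr fun hdvd ↦ ?_).symm
  obtain ⟨σ, hσ⟩ := exists_prime_orderOf_dvd_card' p hdvd
  refine (Fact.out : p.Prime).ne_one (hσ.symm.trans (orderOf_eq_one_iff.mpr ?_))
  refine algEquiv_ext_of_eq_adjoin rfl fun x hx ↦ Subtype.ext ?_
  let τ := σ.liftNormal (AlgebraicClosure (RatFunc Fq))
  have hτ (y) : τ (y : adjoin (RatFunc Fq) {α | ψ M α = 0}) = σ y := σ.liftNormal_commutes _ y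
  have hτpow (n : ℕ) : (τ ^ n) x = (σ ^ n) x := by
    induction n with
    | zero => rfl
    | succ n ih => rw [pow_succ', AlgEquiv.mul_apply, ih, hτ, pow_succ', AlgEquiv.mul_apply]
  rw [← hτ]
  refine hψ.algEquiv_apply_eq_self p hM hx ?_
  rw [hτpow, ← hσ, pow_orderOf_eq_one, AlgEquiv.one_apply]

end IsCarlitz

theorem squarefree_prod_of_monic_irreducible {F : Type*} [Field F] {s : Finset F[X]}
    (hs : ∀ p ∈ s, p.Monic ∧ Irreducible p) : Squarefree (∏ p ∈ s, p) := by
  refine Finset.squarefree_prod_of_pairwise_isCoprime (fun p hp q hq hpq ↦ ?_)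
    fun p hp ↦ (hs p hp).2.squarefree
  refine (hs p hp).2.isRelPrime_iff_not_dvd.mpr fun hdvd ↦ hpq ?_
  exact eq_of_monic_of_associated (hs p hp).1 (hs q hq).1
    ((hs p hp).2.associated_of_dvd (hs q hq).2 hdvd)

theorem carlitz_kummer_semidirect_product_general
    {Fq : Type} [Field Fq] [Fintype Fq]
    (ψ : Polynomial Fq →+* AddMonoid.End (AlgebraicClosure (RatFunc Fq)))
    (hψ : IsCarlitz ψ) (M : Polynomial Fq) (hM : Squarefree M)
    (Γ : Set (AlgebraicClosure (RatFunc Fq))) (hΓ0 : 0 ∈ Γ)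
    (hΓk : Γ ⊆ Set.range (algebraMap (RatFunc Fq) (AlgebraicClosure (RatFunc Fq))))
    (K : IntermediateField (RatFunc Fq) (AlgebraicClosure (RatFunc Fq)))
    (hK : K = adjoin (RatFunc Fq) {x | ψ M x = 0})
    (E : IntermediateField (RatFunc Fq) (AlgebraicClosure (RatFunc Fq)))
    (hE : E = adjoin (RatFunc Fq) {x | ψ M x ∈ Γ})
    (act : Gal(K/RatFunc Fq) → Gal(E/RatFunc Fq) → Gal(E/RatFunc Fq))
    (hact : ∀ (σK : Gal(K/RatFunc Fq)) (g : Gal(E/RatFunc Fq)),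
      (∀ (x : AlgebraicClosure (RatFunc Fq)) (hx : x ∈ K) (hx' : x ∈ E),
        (g ⟨x, hx'⟩ : AlgebraicClosure (RatFunc Fq)) = σK ⟨x, hx⟩) →
      ∀ τ, FixesTorsion ψ M τ → act σK τ = g * τ * g⁻¹) :
    (∀ u : Gal(K/RatFunc Fq) → Gal(K/RatFunc Fq) → K,
      (∀ σ τ, ψ M (u σ τ : AlgebraicClosure (RatFunc Fq)) = 0) →
      (∀ σ τ ρ, σ (u τ ρ) + u σ (τ * ρ) = u σ τ + u (σ * τ) ρ) →
      ∃ v : Gal(K/RatFunc Fq) → K,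
        (∀ σ, ψ M (v σ : AlgebraicClosure (RatFunc Fq)) = 0) ∧
        ∀ σ τ, u σ τ = σ (v τ) - v (σ * τ) + v σ) ∧
    (∀ u : Gal(K/RatFunc Fq) → Gal(K/RatFunc Fq) → Gal(E/RatFunc Fq),
      (∀ σ τ, FixesTorsion ψ M (u σ τ)) →
      (∀ σ τ ρ, act σ (u τ ρ) * u σ (τ * ρ) = u σ τ * u (σ * τ) ρ) →
      ∃ v : Gal(K/RatFunc Fq) → Gal(E/RatFunc Fq),
        (∀ σ, FixesTorsion ψ M (v σ)) ∧
        ∀ σ τ, u σ τ = act σ (v τ) * (v (σ * τ))⁻¹ * v σ) ∧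
    (∃ s : Gal(K/RatFunc Fq) →* Gal(E/RatFunc Fq),
      (∀ (σK : Gal(K/RatFunc Fq)) (x : AlgebraicClosure (RatFunc Fq)) (hx : x ∈ K) (hx' : x ∈ E),
        (s σK ⟨x, hx'⟩ : AlgebraicClosure (RatFunc Fq)) = σK ⟨x, hx⟩) ∧
      ∀ g : Gal(E/RatFunc Fq), ∃! p : Gal(E/RatFunc Fq) × Gal(K/RatFunc Fq),
        FixesTorsion ψ M p.1 ∧ g = p.1 * s p.2) := by
  obtain ⟨p, _⟩ := CharP.exists Fq
  have : Fact p.Prime := ⟨CharP.char_is_prime Fq p⟩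
  have : CharP (RatFunc Fq) p := charP_of_injective_algebraMap (algebraMap Fq _).injective p
  have hequiv := hψ.apply_algEquiv M
  have hKE : K ≤ E := hK ▸ hE ▸ adjoin.mono _ _ _ fun x (hx : ψ M x = 0) ↦ hx.symm.subst hΓ0
  have : FiniteDimensional (RatFunc Fq) K := hK ▸ hψ.finiteDimensional_adjoin_torsion hM.ne_zero
  have : Normal (RatFunc Fq) K := hK ▸ normal_adjoin_ker hequiv
  have : Normal (RatFunc Fq) E := hE ▸ normal_adjoin_preimage hequiv hΓk
  have hcop : (Nat.card Gal(K/RatFunc Fq)).Coprime p :=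
    hK ▸ hψ.coprime_card_gal_adjoin_torsion hM p
  have hsurj := restrictNormalHomOfLE_surjective hKE
  have := isMulCommutative_ker_restrictNormalHomOfLE hequiv hΓk hK hE hKE
  have hpow : ∀ τ ∈ (restrictNormalHomOfLE hKE).ker, τ ^ p = 1 := fun _ ↦
    pow_char_eq_one_of_mem_ker hequiv hΓk hK hE hKE p
  have hker (τ : Gal(E/RatFunc Fq)) : τ ∈ (restrictNormalHomOfLE hKE).ker ↔ FixesTorsion ψ M τ :=
    mem_ker_restrictNormalHomOfLE_iff hKE hK
  simp only [← hker, ← restrictNormalHomOfLE_eq_iff hKE] at hact ⊢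
  refine ⟨fun _ ↦ exists_coboundary_mem_ker hequiv p hcop,
    fun _ ↦ exists_coboundary_mem_subgroup hpow hcop fun σ ↦ (hsurj σ).imp (hact σ), ?_⟩
  obtain ⟨s, hs⟩ := exists_rightInverse_of_coprime_card hsurj hpow hcop
  exact ⟨s, hs, existsUnique_mul_of_rightInverse hs⟩

/-- **Remark after Corollary 2.11.**
Suppose `M` is a product of distinct monic irreducible polynomials of `A = 𝔽_q[T]` (so
that the orders of `Λ_M` and `G(M) = Gal(k(Λ_M)/k)` are relatively prime).  Then
`H²(G(M), Λ_M) = 0`, and `H²(G(M), H_Γ(M))` is trivial (where `G(M)` acts on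
`H_Γ(M) = Gal(k_{M,Γ}/K)` by conjugation); in particular the exact sequence
`1 → H_Γ(M) → G_Γ(M) → G(M) → 1` splits and `G_Γ(M) = Gal(k_{M,Γ}/k)` is a semidirect
product of `H_Γ(M)` by `G(M)`. -/
theorem carlitz_kummer_semidirect_product
    {Fq : Type} [Field Fq] [Fintype Fq]
    (ψ : Polynomial Fq →+* AddMonoid.End (AlgebraicClosure (RatFunc Fq)))
    (hψ : IsCarlitz ψ)
    (M : Polynomial Fq) (hM : 0 < M.natDegree)
    -- M is a product of distinct monic irreducible polynomials
    (hsqf : ∃ s : Finset (Polynomial Fq),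
      (∀ p ∈ s, p.Monic ∧ Irreducible p) ∧ M = ∏ p ∈ s, p)
    -- Γ : a finitely generated A-submodule of (k, +)
    (Γ : AddSubgroup (AlgebraicClosure (RatFunc Fq)))
    (hΓk : ∀ x ∈ Γ, x ∈ Set.range (algebraMap (RatFunc Fq) (AlgebraicClosure (RatFunc Fq))))
    (hΓA : ∀ (f : Polynomial Fq), ∀ x ∈ Γ, ψ f x ∈ Γ)
    (hΓfg : ∃ (n : ℕ) (a : Fin n → AlgebraicClosure (RatFunc Fq)), (∀ i, a i ∈ Γ) ∧
      ∀ x ∈ Γ, ∃ g : Fin n → Polynomial Fq, x = ∑ i, ψ (g i) (a i))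
    -- K = k(Λ_M) and k_{M,Γ} = k(Λ_M, (1/M)Γ)
    (K : IntermediateField (RatFunc Fq) (AlgebraicClosure (RatFunc Fq)))
    (hK : K = adjoin (RatFunc Fq) {x | ψ M x = 0})
    (E : IntermediateField (RatFunc Fq) (AlgebraicClosure (RatFunc Fq)))
    (hE : E = adjoin (RatFunc Fq) {x | ψ M x ∈ Γ})
    -- the conjugation action of G(M) = Gal(K/k) on H_Γ(M) ⊆ G_Γ(M) = Gal(k_{M,Γ}/k):
    -- act σ̄ τ = g τ g⁻¹ for any lift g ∈ G_Γ(M) of σ̄ ∈ G(M)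
    (act : (↥K ≃ₐ[RatFunc Fq] ↥K) → (↥E ≃ₐ[RatFunc Fq] ↥E) → (↥E ≃ₐ[RatFunc Fq] ↥E))
    (hact : ∀ (σK : ↥K ≃ₐ[RatFunc Fq] ↥K) (g : ↥E ≃ₐ[RatFunc Fq] ↥E),
      (∀ (x : AlgebraicClosure (RatFunc Fq)) (hx : x ∈ K) (hx' : x ∈ E),
        (g (⟨x, hx'⟩ : ↥E) : AlgebraicClosure (RatFunc Fq))
          = ((σK (⟨x, hx⟩ : ↥K) : AlgebraicClosure (RatFunc Fq)))) →
      ∀ τ, FixesTorsion ψ M τ → act σK τ = g * τ * g⁻¹) :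
    -- (1) H²(G(M), Λ_M) = 0 : every 2-cocycle with values in Λ_M is a 2-coboundary
    (∀ u : (↥K ≃ₐ[RatFunc Fq] ↥K) → (↥K ≃ₐ[RatFunc Fq] ↥K) → ↥K,
      (∀ σ τ, ψ M ((u σ τ : AlgebraicClosure (RatFunc Fq))) = 0) →
      (∀ σ τ ρ, σ (u τ ρ) + u σ (τ * ρ) = u σ τ + u (σ * τ) ρ) →
      ∃ v : (↥K ≃ₐ[RatFunc Fq] ↥K) → ↥K,
        (∀ σ, ψ M ((v σ : AlgebraicClosure (RatFunc Fq))) = 0) ∧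
        ∀ σ τ, u σ τ = σ (v τ) - v (σ * τ) + v σ) ∧
    -- (2) H²(G(M), H_Γ(M)) is trivial for the conjugation action
    (∀ u : (↥K ≃ₐ[RatFunc Fq] ↥K) → (↥K ≃ₐ[RatFunc Fq] ↥K) →
        (↥E ≃ₐ[RatFunc Fq] ↥E),
      (∀ σ τ, FixesTorsion ψ M (u σ τ)) →
      (∀ σ τ ρ, act σ (u τ ρ) * u σ (τ * ρ) = u σ τ * u (σ * τ) ρ) →
      ∃ v : (↥K ≃ₐ[RatFunc Fq] ↥K) → (↥E ≃ₐ[RatFunc Fq] ↥E),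
        (∀ σ, FixesTorsion ψ M (v σ)) ∧
        ∀ σ τ, u σ τ = act σ (v τ) * (v (σ * τ))⁻¹ * v σ) ∧
    -- (3) the exact sequence 1 → H_Γ(M) → G_Γ(M) → G(M) → 1 splits, exhibiting G_Γ(M)
    -- as a semidirect product of H_Γ(M) by G(M)
    (∃ s : (↥K ≃ₐ[RatFunc Fq] ↥K) →* (↥E ≃ₐ[RatFunc Fq] ↥E),
      (∀ (σK : ↥K ≃ₐ[RatFunc Fq] ↥K) (x : AlgebraicClosure (RatFunc Fq))
          (hx : x ∈ K) (hx' : x ∈ E),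
        ((s σK) (⟨x, hx'⟩ : ↥E) : AlgebraicClosure (RatFunc Fq))
          = ((σK (⟨x, hx⟩ : ↥K) : AlgebraicClosure (RatFunc Fq)))) ∧
      ∀ g : ↥E ≃ₐ[RatFunc Fq] ↥E,
        ∃! p : (↥E ≃ₐ[RatFunc Fq] ↥E) × (↥K ≃ₐ[RatFunc Fq] ↥K),
          FixesTorsion ψ M p.1 ∧ g = p.1 * s p.2) := by
  obtain ⟨s, hs, rfl⟩ := hsqf
  exact carlitz_kummer_semidirect_product_general ψ hψ _
    (squarefree_prod_of_monic_irreducible hs) Γ Γ.zero_mem hΓk K hK E hE act hact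
end

section
/- Let Γ be a free A-submodule of (L,+) of rank r with basis {a_1, …, a_r}. Then for all but finitely many monic irreducible polynomials l of A, the elements a_1, …, a_r are linearly independent modulo φ_l(L) over A/lA, and consequently H_Γ(l) = Gal(L(Λ_l^φ, (1/l)Γ)/L(Λ_l^φ)) is isomorphic as an A-module to the direct product Λ_l^φ × ⋯ × Λ_l^φ of r copies of Λ_l^φ. -/
open Polynomial IntermediateField

set_option synthInstance.maxHeartbeats 1000000
set_option maxHeartbeats 1000000

/-- `φ` is a rank one Drinfeld `A = 𝔽_q[T]`-module defined over the finite extension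
`L` of `k = 𝔽_q(T)` (viewed as an `A`-field of generic characteristic): a ring
homomorphism `A → End_{𝔽_q}(k̄, +)` with `φ_T(X) = TX + aX^q` for some nonzero
`a ∈ L`, and `φ_c(X) = cX` for constants `c ∈ 𝔽_q`. -/
def IsDrinfeldRankOne {Fq : Type} [Field Fq] [Fintype Fq]
    (L : IntermediateField (RatFunc Fq) (AlgebraicClosure (RatFunc Fq)))
    (φ : Polynomial Fq →+* AddMonoid.End (AlgebraicClosure (RatFunc Fq))) : Prop :=
  ∃ a : AlgebraicClosure (RatFunc Fq), a ∈ L ∧ a ≠ 0 ∧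
    (∀ α, φ X α = algebraMap (RatFunc Fq) (AlgebraicClosure (RatFunc Fq)) RatFunc.X * α
        + a * α ^ Fintype.card Fq) ∧
    (∀ (c : Fq) (α), φ (C c) α
        = algebraMap (RatFunc Fq) (AlgebraicClosure (RatFunc Fq)) (RatFunc.C c) * α)

/-!
Multiplication by a root `b` of `b ^ (q - 1) = a` turns the module into the Carlitz module, at the
cost of an extension of bounded degree. The relations `φ_l(w) = ∑ φ_{g_i}(a_i)` with `w ∈ L` and
`deg g_i ≤ deg l` only involve finitely many `w`: such `w` have poles above finitely many places
and of bounded order. One nonzero `n` therefore sends them all into `Γ`, and reducing the `g_i`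
modulo `l` shows that `a_1, …, a_r` are independent modulo `φ_l(L)` as soon as `l ∤ n`.

For the Kummer map, `H_Γ(l)` is stable under conjugation by `Gal(L(Λ_l)/L) ⊆ (A/l)ˣ`. The
Carlitz torsion polynomial at `l` is Eisenstein, so this subgroup has bounded index; once it has
more than `√|A/l|` elements it generates the ring `A/l`, and the image of the Kummer map in `Λ_l^r`
is an `A/l`-subspace. If it were proper, a linear form vanishing on it would give a nontrivial
combination of the `α_i` fixed by `H_Γ(l)`, which by Sah's lemma differs from an element of `L` by
torsion, against the independence of the `a_i`.
-/

section Kummer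

lemma closure_eq_top_of_card_lt_sq {F : Type*} [Field F] [Finite F] {S : Set F}
    (hS : Nat.card F < S.ncard ^ 2) : Subring.closure S = ⊤ := by
  set R := Subring.closure S
  let _ : Field R := (Finite.isField_of_domain R).toField
  have hSR : S.ncard ≤ Nat.card R := Set.ncard_le_ncard Subring.subset_closure
  have hcard : Nat.card F = Nat.card R ^ Module.finrank R F := Module.natCard_eq_pow_finrank
  have hfinrank : Module.finrank R F < 2 := by
    refine (Nat.pow_lt_pow_iff_right (Finite.one_lt_card (α := R))).1 ?_
    exact hcard ▸ hS.trans_le (Nat.pow_le_pow_left hSR 2)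
  have hpos : 0 < Module.finrank R F := Module.finrank_pos
  rw [show Module.finrank R F = 1 by lia, pow_one] at hcard
  exact SetLike.coe_injective ((Set.eq_univ_iff_ncard _).2 hcard.symm)

lemma smul_mem_of_mem_subringClosure {R V : Type*} [Ring R] [AddCommGroup V] [Module R V]
    {W : AddSubgroup V} {S : Set R} (hS : ∀ s ∈ S, ∀ v ∈ W, s • v ∈ W) {r : R}
    (hr : r ∈ Subring.closure S) {v : V} (hv : v ∈ W) : r • v ∈ W := by
  induction hr using Subring.closure_induction generalizing v with
  | mem s hs => exact hS s hs v hv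
  | zero => rw [zero_smul]; exact W.zero_mem
  | one => rwa [one_smul]
  | add r s _ _ hr hs => rw [add_smul]; exact W.add_mem (hr hv) (hs hv)
  | neg r _ hr => rw [neg_smul]; exact W.neg_mem (hr hv)
  | mul r s _ _ hr hs => rw [mul_smul]; exact hr (hs hv)

lemma exists_ne_zero_sum_smul_eq_zero {F V ι : Type*} [Field F] [AddCommGroup V] [Module F V]
    [Fintype ι] {u : V} (hu : ⊤ ≤ Submodule.span F {u}) {W : Submodule F (ι → V)} (hW : W ≠ ⊤) :
    ∃ c : ι → F, c ≠ 0 ∧ ∀ w ∈ W, ∑ i, c i • w i = 0 := by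
  classical
  obtain ⟨e, he, hWe⟩ := Submodule.exists_le_ker_of_lt_top W hW.lt_top
  have happly (w : ι → V) : ∑ i, e (Pi.single i u) • w i = e w • u := by
    choose f hf using fun i ↦ Submodule.mem_span_singleton.1 (hu (x := w i) trivial)
    have hw : w = ∑ i, f i • Pi.single i u := by
      ext i; simp [Finset.sum_apply, Pi.single_apply, hf]
    conv_rhs => rw [hw]
    simp only [map_sum, map_smul, Finset.sum_smul, smul_eq_mul, ← hf, mul_smul]
    exact Finset.sum_congr rfl fun i _ ↦ smul_comm ..
  refine ⟨fun i ↦ e (Pi.single i u), fun hc ↦ he ?_, fun w hw ↦ ?_⟩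
  · ext i x
    obtain ⟨f, rfl⟩ := Submodule.mem_span_singleton.1 (hu (x := x) trivial)
    simpa [Pi.single_smul] using Or.inr (congrFun hc i)
  · rw [happly, LinearMap.mem_ker.1 (hWe hw), zero_smul]

variable {A G M : Type*} [CommRing A] [Group G] [AddCommGroup M] [Module A M]
  (ρ : Representation A G M) (l : A)

open Submodule (torsionBy)

lemma map_mem_torsionBy (σ : G) {x : M} (hx : x ∈ torsionBy A M l) : ρ σ x ∈ torsionBy A M l := by
  rw [Submodule.mem_torsionBy_iff] at *
  rw [← map_smul, hx, map_zero]

/-- The kernel of the action of `G` on the `l`-torsion: when `G` is the Galois group of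
`L(Λ_l, (1/l)Γ)` over `L` this is the group `H_Γ(l)`. -/
def torsionFixer : Subgroup G where
  carrier := {σ | ∀ x ∈ torsionBy A M l, ρ σ x = x}
  one_mem' := by simp
  mul_mem' hσ hτ x hx := by rw [map_mul, Module.End.mul_apply, hτ x hx, hσ x hx]
  inv_mem' {σ} hσ x hx := by
    conv_lhs => rw [← hσ x hx]
    exact ρ.inv_self_apply σ x

variable {ρ l}

lemma mem_torsionFixer {σ : G} : σ ∈ torsionFixer ρ l ↔ ∀ x ∈ torsionBy A M l, ρ σ x = x :=
  Iff.rfl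

lemma conj_mem_torsionFixer {σ : G} (hσ : σ ∈ torsionFixer ρ l) (τ : G) :
    τ * σ * τ⁻¹ ∈ torsionFixer ρ l := fun x hx ↦ by
  rw [map_mul, map_mul, Module.End.mul_apply, Module.End.mul_apply,
    hσ _ (map_mem_torsionBy ρ l τ⁻¹ hx), ρ.self_inv_apply]

lemma sub_mem_torsionBy {m : M} (hm : l • m ∈ ρ.invariants) (σ : G) :
    ρ σ m - m ∈ torsionBy A M l := by
  rw [Submodule.mem_torsionBy_iff, smul_sub, ← map_smul, hm σ, sub_self]

lemma exists_forall_apply_eq_smul {u : M} (hu : torsionBy A M l = A ∙ u) (σ : G) :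
    ∃ a : A, ∀ x ∈ torsionBy A M l, ρ σ x = a • x := by
  have hu_mem : u ∈ torsionBy A M l := hu ▸ Submodule.mem_span_singleton_self u
  obtain ⟨a, ha⟩ := Submodule.mem_span_singleton.1 (hu ▸ map_mem_torsionBy ρ l σ hu_mem)
  refine ⟨a, fun x hx ↦ ?_⟩
  obtain ⟨b, rfl⟩ := Submodule.mem_span_singleton.1 (hu ▸ hx)
  rw [map_smul, ← ha, smul_comm]

variable {ι : Type*} {α : ι → M}

variable (ρ l α) in
/-- The Kummer map `σ ↦ (σ α_i - α_i)_i` attached to `l`-division points `α_i` of invariant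
elements. -/
def kummerMap (hα : ∀ i, l • α i ∈ ρ.invariants) :
    Additive (torsionFixer ρ l) →+ (ι → torsionBy A M l) where
  toFun σ i := ⟨ρ σ.toMul (α i) - α i, sub_mem_torsionBy (hα i) _⟩
  map_zero' := by ext; simp
  map_add' σ τ := by
    ext i
    have h := mem_torsionFixer.1 σ.toMul.2 _ (sub_mem_torsionBy (hα i) τ.toMul)
    rw [map_sub] at h
    simp only [toMul_add, Subgroup.coe_mul, map_mul, Module.End.mul_apply, Pi.add_apply,
      Submodule.coe_add]
    rw [← h]
    abel

lemma kummerMap_apply (hα : ∀ i, l • α i ∈ ρ.invariants) (σ : Additive (torsionFixer ρ l))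
    (i : ι) : (kummerMap ρ l α hα σ i : M) = ρ σ.toMul (α i) - α i :=
  rfl

/-- Conjugating `σ` by `τ` multiplies the Kummer cocycle of `σ` by the scalar through which `τ`
acts on the torsion. -/
lemma smul_mem_range_kummerMap {hα : ∀ i, l • α i ∈ ρ.invariants} {τ : G} {a : A}
    (hτ : ∀ x ∈ torsionBy A M l, ρ τ x = a • x) {v : ι → torsionBy A M l}
    (hv : v ∈ (kummerMap ρ l α hα).range) : a • v ∈ (kummerMap ρ l α hα).range := by
  obtain ⟨σ, rfl⟩ := hv
  refine ⟨.ofMul ⟨_, conj_mem_torsionFixer σ.toMul.2 τ⟩, ?_⟩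
  ext i
  have hfix := mem_torsionFixer.1 σ.toMul.2 _ (sub_mem_torsionBy (hα i) τ⁻¹)
  have hscal := hτ _ (sub_mem_torsionBy (hα i) σ.toMul)
  rw [map_sub, sub_eq_iff_eq_add] at hfix
  simp only [kummerMap_apply, Pi.smul_apply, Submodule.coe_smul, toMul_ofMul, ← hscal, map_mul,
    Module.End.mul_apply, hfix, map_add, map_sub, ρ.self_inv_apply]
  abel

lemma smul_mem_range_kummerMap_of_card_lt [(Ideal.span {l}).IsMaximal] [Finite (A ⧸ Ideal.span {l})]
    {u : M} (hu : torsionBy A M l = A ∙ u)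
    (hcard : Nat.card (A ⧸ Ideal.span {l}) < (Set.range fun σ ↦ ρ σ u).ncard ^ 2)
    {hα : ∀ i, l • α i ∈ ρ.invariants} (c : A ⧸ Ideal.span {l}) {v : ι → torsionBy A M l}
    (hv : v ∈ (kummerMap ρ l α hα).range) : c • v ∈ (kummerMap ρ l α hα).range := by
  let _ := Ideal.Quotient.field (Ideal.span {l})
  let S : Set (A ⧸ Ideal.span {l}) :=
    {c | ∃ a : A, Ideal.Quotient.mk _ a = c ∧ ∃ σ, ∀ x ∈ torsionBy A M l, ρ σ x = a • x}
  have hu_mem : u ∈ torsionBy A M l := hu ▸ Submodule.mem_span_singleton_self u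
  have horbit : Set.range (fun σ ↦ ρ σ u) ⊆
      (fun c : A ⧸ Ideal.span {l} ↦ ((c • ⟨u, hu_mem⟩ : torsionBy A M l) : M)) '' S := by
    rintro _ ⟨σ, rfl⟩
    obtain ⟨a, ha⟩ := exists_forall_apply_eq_smul hu σ
    refine ⟨_, ⟨a, rfl, σ, ha⟩, ?_⟩
    simp only [Submodule.torsionBy.mk_smul, Submodule.coe_smul, ha u hu_mem]
  have hS : Subring.closure S = ⊤ := closure_eq_top_of_card_lt_sq <|
    hcard.trans_le (Nat.pow_le_pow_left ((Set.ncard_le_ncard horbit (Set.toFinite _)).trans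
      (Set.ncard_image_le (Set.toFinite S))) 2)
  refine smul_mem_of_mem_subringClosure ?_ (hS ▸ Subring.mem_top c) hv
  rintro _ ⟨a, rfl, σ, hσ⟩ v hv
  exact smul_mem_range_kummerMap hσ hv

/-- Sah's lemma: `τ₀` is central modulo `torsionFixer ρ l`, and `τ₀ - 1` is invertible on the
torsion, so it kills the cohomology class of `σ ↦ σ m - m`. -/
lemma exists_sub_mem_invariants [(Ideal.span {l}).IsMaximal] {u : M}
    (hu : torsionBy A M l = A ∙ u) {τ₀ : G} (hτ₀ : ρ τ₀ u ≠ u) {m : M}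
    (hlm : l • m ∈ ρ.invariants) (hm : ∀ σ ∈ torsionFixer ρ l, ρ σ m = m) :
    ∃ z ∈ torsionBy A M l, m - z ∈ ρ.invariants := by
  choose a ha using exists_forall_apply_eq_smul (ρ := ρ) hu
  have hu_mem : u ∈ torsionBy A M l := hu ▸ Submodule.mem_span_singleton_self u
  have hnot : a τ₀ - 1 ∉ Ideal.span {l} := fun h ↦ hτ₀ <| by
    obtain ⟨b, hb⟩ := Ideal.mem_span_singleton.1 h
    rw [ha τ₀ u hu_mem, ← sub_eq_zero, ← one_smul A u, smul_smul, ← sub_smul, mul_one, hb, mul_comm,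
      mul_smul, (Submodule.mem_torsionBy_iff l u).1 hu_mem, smul_zero]
  obtain ⟨k, hk⟩ : ∃ k, ∀ x ∈ torsionBy A M l, k • (ρ τ₀ x - x) = x := by
    obtain ⟨k, d, hd, hkd⟩ := Ideal.IsMaximal.exists_inv (I := Ideal.span {l}) ‹_› hnot
    obtain ⟨b, rfl⟩ := Ideal.mem_span_singleton.1 hd
    refine ⟨k, fun x hx ↦ ?_⟩
    rw [ha τ₀ x hx]
    have h := congrArg (· • x) hkd
    simp only [add_smul, mul_smul, sub_smul, one_smul, smul_comm l b x,
      (Submodule.mem_torsionBy_iff l x).1 hx, smul_zero, add_zero] at h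
    exact h
  refine ⟨k • (ρ τ₀ m - m), Submodule.smul_mem _ _ (sub_mem_torsionBy hlm τ₀), fun τ ↦ ?_⟩
  have hcomm : ρ (τ * τ₀) m = ρ (τ₀ * τ) m := by
    have hmem : (τ₀ * τ)⁻¹ * (τ * τ₀) ∈ torsionFixer ρ l := fun x hx ↦ by
      have h : ρ (τ * τ₀) x = ρ (τ₀ * τ) x := by
        simp only [map_mul, Module.End.mul_apply, ha τ x hx, ha τ₀ x hx, map_smul]
        exact smul_comm ..
      rw [map_mul, Module.End.mul_apply, h, ρ.inv_self_apply]
    rw [← ρ.self_inv_apply (τ₀ * τ) (ρ (τ * τ₀) m)]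
    exact congrArg _ (by rw [← Module.End.mul_apply, ← map_mul, hm _ hmem])
  have h := hk _ (sub_mem_torsionBy hlm τ)
  simp only [map_mul, Module.End.mul_apply] at hcomm
  simp only [map_sub, map_smul, hcomm] at h ⊢
  linear_combination (norm := module) -h

/-- The image is a vector space over `A ⧸ (l)`. If it were proper, a linear form vanishing on it
would give a combination `∑ i, c i • α i` fixed by `torsionFixer ρ l`, which Sah's lemma moves by
torsion to an invariant element. -/
theorem kummerMap_surjective [(Ideal.span {l}).IsMaximal] [Finite (A ⧸ Ideal.span {l})]
    [Fintype ι] {u : M} (hu : torsionBy A M l = A ∙ u)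
    (hcard : Nat.card (A ⧸ Ideal.span {l}) < (Set.range fun σ ↦ ρ σ u).ncard ^ 2)
    (hα : ∀ i, l • α i ∈ ρ.invariants)
    (hind : ∀ g : ι → A, (∃ w ∈ ρ.invariants, l • w = ∑ i, g i • l • α i) → ∀ i, l ∣ g i) :
    Function.Surjective (kummerMap ρ l α hα) := by
  let _ := Ideal.Quotient.field (Ideal.span {l})
  let W : Submodule (A ⧸ Ideal.span {l}) (ι → torsionBy A M l) :=
    { (kummerMap ρ l α hα).range with
      smul_mem' := fun c _ hv ↦ smul_mem_range_kummerMap_of_card_lt hu hcard c hv }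
  suffices hW : W = ⊤ from fun v ↦ (hW ▸ Submodule.mem_top : v ∈ W)
  by_contra hW
  have hu_mem : u ∈ torsionBy A M l := hu ▸ Submodule.mem_span_singleton_self u
  have hspan : ⊤ ≤ Submodule.span (A ⧸ Ideal.span {l}) {(⟨u, hu_mem⟩ : torsionBy A M l)} := by
    rintro ⟨x, hx⟩ -
    obtain ⟨b, rfl⟩ := Submodule.mem_span_singleton.1 (hu ▸ hx)
    exact Submodule.mem_span_singleton.2 ⟨Ideal.Quotient.mk _ b, rfl⟩
  obtain ⟨c, hc, hcW⟩ := exists_ne_zero_sum_smul_eq_zero hspan hW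
  choose g hg using fun i ↦ Ideal.Quotient.mk_surjective (c i)
  have hlβ : l • ∑ i, g i • α i = ∑ i, g i • l • α i := by
    simp only [Finset.smul_sum, smul_comm l]
  have hβ : ∀ σ ∈ torsionFixer ρ l, ρ σ (∑ i, g i • α i) = ∑ i, g i • α i := fun σ hσ ↦ by
    have h := congrArg Subtype.val (hcW _ ⟨.ofMul ⟨σ, hσ⟩, rfl⟩)
    simp only [← hg, Submodule.torsionBy.mk_smul, Submodule.coe_sum, Submodule.coe_smul,
      kummerMap_apply, smul_sub, Finset.sum_sub_distrib, Submodule.coe_zero] at h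
    simpa [sub_eq_zero] using h
  obtain ⟨τ₀, hτ₀⟩ : ∃ τ₀, ρ τ₀ u ≠ u := by
    by_contra! h
    simp only [h, Set.range_const, Set.ncard_singleton, one_pow] at hcard
    exact hcard.not_ge Nat.card_pos
  obtain ⟨z, hz, hw⟩ := exists_sub_mem_invariants hu hτ₀
    (hlβ ▸ Submodule.sum_mem _ fun i _ σ ↦ by rw [map_smul, hα i σ]) hβ
  refine hc (funext fun i ↦ ?_)
  rw [← hg, Pi.zero_apply, Ideal.Quotient.eq_zero_iff_mem, Ideal.mem_span_singleton]
  refine hind g ⟨_, hw, ?_⟩ i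
  rw [smul_sub, hlβ, (Submodule.mem_torsionBy_iff l z).1 hz, sub_zero]

lemma torsionBy_eq_span_singleton [(Ideal.span {l}).IsMaximal]
    (hfin : (torsionBy A M l : Set M).Finite)
    (hcard : (torsionBy A M l : Set M).ncard ≤ Nat.card (A ⧸ Ideal.span {l})) {u : M}
    (hu : u ∈ torsionBy A M l) (hu0 : u ≠ 0) : torsionBy A M l = A ∙ u := by
  let _ := Ideal.Quotient.field (Ideal.span {l})
  have hle : (A ∙ u) ≤ torsionBy A M l := (Submodule.span_singleton_le_iff_mem u _).2 hu
  let smulU : A ⧸ Ideal.span {l} → M := fun c ↦ ((c • ⟨u, hu⟩ : torsionBy A M l) : M)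
  have hinj : Function.Injective smulU :=
    Subtype.val_injective.comp (smul_left_injective _ fun h ↦ hu0 (congrArg Subtype.val h))
  have hrange : Set.range smulU ⊆ (A ∙ u : Set M) := by
    rintro _ ⟨c, rfl⟩
    obtain ⟨b, rfl⟩ := Ideal.Quotient.mk_surjective c
    exact Submodule.mem_span_singleton.2 ⟨b, rfl⟩
  refine (SetLike.coe_injective (Set.eq_of_subset_of_ncard_le hle ?_ hfin)).symm
  calc (torsionBy A M l : Set M).ncard ≤ (Set.range smulU).ncard := by
        rwa [← Set.image_univ, Set.ncard_image_of_injective _ hinj, Set.ncard_univ]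
    _ ≤ (A ∙ u : Set M).ncard := Set.ncard_le_ncard hrange (hfin.subset hle)

end Kummer

section DivisionHull

lemma exists_ne_zero_forall_smul_mem {A M : Type*} [CommRing A] [IsDomain A] [AddCommGroup M]
    [Module A M] (N : Submodule A M) {W : Set M} (hW : W.Finite)
    (h : ∀ w ∈ W, ∃ a : A, a ≠ 0 ∧ a • w ∈ N) : ∃ a : A, a ≠ 0 ∧ ∀ w ∈ W, a • w ∈ N := by
  choose! a ha0 ha using h
  refine ⟨∏ w ∈ hW.toFinset, a w, Finset.prod_ne_zero_iff.2 fun w hw ↦ ha0 w (by simpa using hw),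
    fun w hw ↦ ?_⟩
  obtain ⟨c, hc⟩ := Finset.dvd_prod_of_mem a (hW.mem_toFinset.2 hw)
  rw [hc, mul_comm, mul_smul]
  exact N.smul_mem c (ha w hw)

lemma dvd_of_smul_eq_sum_of_smul_mem_span {A M ι : Type*} [CommRing A] [AddCommGroup M]
    [Module A M] [Fintype ι] {x : ι → M} (hx : LinearIndependent A x) {l n : A} (hl : Prime l)
    (hn : ¬ l ∣ n) {w : M} (hnw : n • w ∈ Submodule.span A (Set.range x)) {g : ι → A}
    (hw : l • w = ∑ i, g i • x i) (i : ι) : l ∣ g i := by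
  obtain ⟨c, hc⟩ := (Submodule.mem_span_range_iff_exists_fun A).1 hnw
  have hsum : ∑ i, (n * g i - l * c i) • x i = 0 := by
    simp only [sub_smul, mul_smul, Finset.sum_sub_distrib, ← Finset.smul_sum, hc, ← hw]
    rw [smul_comm, sub_self]
  refine (hl.dvd_or_dvd (a := n) ⟨c i, ?_⟩).resolve_left hn
  exact sub_eq_zero.1 (Fintype.linearIndependent_iff.1 hx _ hsum i)

/-- Reducing the coefficients modulo `l` moves any relation `l • w = ∑ g i • x i` into the finite
set of relations with small coefficients, all of which one nonzero `n` pushes into the span. -/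
theorem exists_ne_zero_forall_not_dvd_imp_dvd_coeff {F M ι : Type*} [Field F] [AddCommGroup M]
    [Module F[X] M] [Fintype ι] {x : ι → M} (hx : LinearIndependent F[X] x)
    (hfin : {w | ∃ l : F[X], l.Monic ∧ ∃ g : ι → F[X],
      (∀ i, (g i).natDegree ≤ l.natDegree) ∧ l • w = ∑ i, g i • x i}.Finite) :
    ∃ n : F[X], n ≠ 0 ∧ ∀ l : F[X], l.Monic → Irreducible l → ¬ l ∣ n →
      ∀ g : ι → F[X], (∃ w, l • w = ∑ i, g i • x i) → ∀ i, l ∣ g i := by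
  obtain ⟨n, hn0, hn⟩ :=
    exists_ne_zero_forall_smul_mem (Submodule.span F[X] (Set.range x)) hfin <| by
      rintro w ⟨l, hl, g, -, hw⟩
      exact ⟨l, hl.ne_zero, (Submodule.mem_span_range_iff_exists_fun _).2 ⟨g, hw.symm⟩⟩
  refine ⟨n, hn0, fun l hl hi hln g ⟨w, hw⟩ i ↦ ?_⟩
  have hmod (i : ι) : g i %ₘ l = g i - l * (g i /ₘ l) := modByMonic_eq_sub_mul_div (g i) l
  have hw' : l • (w - ∑ i, (g i /ₘ l) • x i) = ∑ i, (g i %ₘ l) • x i := by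
    simp only [hmod, sub_smul, mul_smul, Finset.sum_sub_distrib, smul_sub, Finset.smul_sum, hw]
  have hmem := hn _ ⟨l, hl, _, fun i ↦ natDegree_modByMonic_le (g i) hl, hw'⟩
  have hdvd := dvd_of_smul_eq_sum_of_smul_mem_span hx hi.prime hln hmem hw' i
  rw [hmod] at hdvd
  exact (dvd_sub_left (dvd_mul_right _ _)).1 hdvd

end DivisionHull

lemma isMonicOfDegree_divX {R : Type*} [Semiring R] [Nontrivial R] {p : R[X]} {n : ℕ}
    (hp : p.IsMonicOfDegree (n + 1)) :
    p.divX.IsMonicOfDegree n := by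
  have hdegree : p.divX.natDegree = n := by
    rw [natDegree_divX_eq_natDegree_tsub_one, hp.natDegree_eq, Nat.add_sub_cancel]
  refine ⟨hdegree, ?_⟩
  rw [Monic, leadingCoeff, hdegree, coeff_divX, ← hp.natDegree_eq]
  exact hp.leadingCoeff_eq

section DrinfeldHom

variable {Fq R S : Type*} [Field Fq] [Fintype Fq] [CommRing R] [Algebra Fq R] [CommRing S]
  [Algebra Fq S]

/-- The endomorphism `φ_T(x) = t x + a x ^ q` of an `𝔽_q`-algebra, through which `T` acts in the
rank one Drinfeld module with coefficient `a`, where `t` is the image of `T`. -/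
noncomputable def drinfeldEnd (t a : R) : Module.End Fq R :=
  LinearMap.mulLeft Fq t + LinearMap.mulLeft Fq a ∘ₗ (FiniteField.frobeniusAlgHom Fq R).toLinearMap

/-- The rank one Drinfeld module `f ↦ φ_f` with `φ_T(x) = t x + a x ^ q`, acting on the points of
an `𝔽_q`-algebra `R`. The choice `a = 1` is the Carlitz module. -/
noncomputable def drinfeldHom (t a : R) : Fq[X] →ₐ[Fq] Module.End Fq R :=
  aeval (drinfeldEnd t a)

lemma drinfeldHom_X (t a x : R) :
    drinfeldHom t a (X : Fq[X]) x = t * x + a * x ^ Fintype.card Fq := by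
  simp [drinfeldHom, drinfeldEnd]

lemma drinfeldHom_C (t a : R) (c : Fq) (x : R) :
    drinfeldHom t a (C c) x = algebraMap Fq R c * x := by
  simp [drinfeldHom, Module.algebraMap_end_apply, Algebra.smul_def]

lemma drinfeldHom_X_mul (t a : R) (f : Fq[X]) (x : R) :
    drinfeldHom t a (X * f) x =
      t * drinfeldHom t a f x + a * drinfeldHom t a f x ^ Fintype.card Fq := by
  rw [map_mul, Module.End.mul_apply, drinfeldHom_X]

lemma drinfeldHom_drinfeldHom_eq_zero {t a : R} {f : Fq[X]} {x : R} (hx : drinfeldHom t a f x = 0)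
    (g : Fq[X]) : drinfeldHom t a f (drinfeldHom t a g x) = 0 := by
  rw [← Module.End.mul_apply, ← map_mul, mul_comm, map_mul, Module.End.mul_apply, hx,
    map_zero]

lemma map_drinfeldHom (F : R →ₐ[Fq] S) (t a : R) (f : Fq[X]) (x : R) :
    F (drinfeldHom t a f x) = drinfeldHom (F t) (F a) f (F x) := by
  induction f using Polynomial.induction_on with
  | C c => simp [drinfeldHom_C]
  | add f g hf hg => simp [hf, hg]
  | monomial n c h =>
    rw [pow_succ', mul_left_comm, drinfeldHom_X_mul, drinfeldHom_X_mul, ← h]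
    simp only [map_add, map_mul, map_pow]

lemma algebraMap_drinfeldHom [Algebra R S] [IsScalarTower Fq R S] (t a : R) (f : Fq[X]) (x : R) :
    algebraMap R S (drinfeldHom t a f x) =
      drinfeldHom (algebraMap R S t) (algebraMap R S a) f (algebraMap R S x) :=
  map_drinfeldHom (IsScalarTower.toAlgHom Fq R S) t a f x

lemma algebraMap_sum_drinfeldHom [Algebra R S] [IsScalarTower Fq R S] {ι : Type*} [Fintype ι]
    (t a : R) (g : ι → Fq[X]) (x : ι → R) :
    algebraMap R S (∑ i, drinfeldHom t a (g i) (x i)) =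
      ∑ i, drinfeldHom (algebraMap R S t) (algebraMap R S a) (g i) (algebraMap R S (x i)) := by
  simp only [map_sum, algebraMap_drinfeldHom]

lemma eq_drinfeldHom_of_apply_X_of_apply_C {φ : Fq[X] →+* AddMonoid.End R} {t a : R}
    (hX : ∀ x, φ X x = t * x + a * x ^ Fintype.card Fq)
    (hC : ∀ c x, φ (C c) x = algebraMap Fq R c * x) (f : Fq[X]) (x : R) :
    φ f x = drinfeldHom t a f x := by
  induction f using Polynomial.induction_on generalizing x with
  | C c => rw [hC, drinfeldHom_C]
  | add f g hf hg => rw [map_add, map_add, LinearMap.add_apply, ← hf, ← hg]; rfl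
  | monomial n c h =>
    rw [pow_succ', mul_left_comm, drinfeldHom_X_mul, ← h, ← hX, map_mul]
    rfl

variable (Fq) in
/-- The additive group of `R` as an `𝔽_q[T]`-module through `drinfeldHom t a`. -/
noncomputable abbrev DrinfeldPoints (t a : R) : Type _ :=
  Module.AEval' (drinfeldEnd (Fq := Fq) t a)

variable (Fq) in
/-- The identity map from `R` to the `𝔽_q[T]`-module `DrinfeldPoints Fq t a`. -/
noncomputable abbrev DrinfeldPoints.of (t a : R) : R ≃ₗ[Fq] DrinfeldPoints Fq t a :=
  Module.AEval'.of (drinfeldEnd t a)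

lemma smul_of_drinfeldPoints (t a : R) (f : Fq[X]) (x : R) :
    f • DrinfeldPoints.of Fq t a x = DrinfeldPoints.of Fq t a (drinfeldHom t a f x) :=
  (Module.AEval.of_aeval_smul _ f x).symm

lemma of_mem_torsionBy_drinfeldPoints_iff {t a : R} {f : Fq[X]} {x : R} :
    DrinfeldPoints.of Fq t a x ∈ Submodule.torsionBy Fq[X] _ f ↔ drinfeldHom t a f x = 0 := by
  rw [Submodule.mem_torsionBy_iff, smul_of_drinfeldPoints,
    map_eq_zero_iff _ (LinearEquiv.injective _)]

lemma coe_torsionBy_drinfeldPoints (t a : R) (f : Fq[X]) :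
    (Submodule.torsionBy Fq[X] (DrinfeldPoints Fq t a) f : Set (DrinfeldPoints Fq t a)) =
      DrinfeldPoints.of Fq t a '' {x | drinfeldHom t a f x = 0} := by
  ext x
  obtain ⟨x, rfl⟩ := (DrinfeldPoints.of Fq t a).surjective x
  rw [SetLike.mem_coe, of_mem_torsionBy_drinfeldPoints_iff,
    (DrinfeldPoints.of Fq t a).injective.mem_set_image]
  rfl

lemma linearIndependent_of_drinfeldPoints_iff {ι : Type*} [Fintype ι] {t a : R} {x : ι → R} :
    LinearIndependent Fq[X] (fun i ↦ DrinfeldPoints.of Fq t a (x i)) ↔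
      ∀ g : ι → Fq[X], ∑ i, drinfeldHom t a (g i) (x i) = 0 → ∀ i, g i = 0 := by
  simp_rw [Fintype.linearIndependent_iff, smul_of_drinfeldPoints, ← map_sum,
    map_eq_zero_iff _ (DrinfeldPoints.of Fq t a).injective]

theorem exists_ne_zero_forall_not_dvd_imp_dvd_of_drinfeldHom_eq_sum {ι : Type*}
    [Fintype ι] {t a : R} {x : ι → R}
    (hx : ∀ g : ι → Fq[X], ∑ i, drinfeldHom t a (g i) (x i) = 0 → ∀ i, g i = 0)
    (hfin : {w : R | ∃ l : Fq[X], l.Monic ∧ ∃ g : ι → Fq[X],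
      (∀ i, (g i).natDegree ≤ l.natDegree) ∧
        drinfeldHom t a l w = ∑ i, drinfeldHom t a (g i) (x i)}.Finite) :
    ∃ n : Fq[X], n ≠ 0 ∧ ∀ l : Fq[X], l.Monic → Irreducible l → ¬ l ∣ n → ∀ g : ι → Fq[X],
      (∃ w, drinfeldHom t a l w = ∑ i, drinfeldHom t a (g i) (x i)) → ∀ i, l ∣ g i := by
  have hiff (l : Fq[X]) (g : ι → Fq[X]) (w : R) :
      l • DrinfeldPoints.of Fq t a w = ∑ i, g i • DrinfeldPoints.of Fq t a (x i) ↔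
        drinfeldHom t a l w = ∑ i, drinfeldHom t a (g i) (x i) := by
    simp only [smul_of_drinfeldPoints, ← map_sum, EmbeddingLike.apply_eq_iff_eq]
  have hlin : LinearIndependent Fq[X] (fun i ↦ DrinfeldPoints.of Fq t a (x i)) :=
    linearIndependent_of_drinfeldPoints_iff.2 hx
  have hfin' : {w | ∃ l : Fq[X], l.Monic ∧ ∃ g : ι → Fq[X],
      (∀ i, (g i).natDegree ≤ l.natDegree) ∧
        l • w = ∑ i, g i • DrinfeldPoints.of Fq t a (x i)}.Finite := by
    refine (hfin.image (DrinfeldPoints.of Fq t a)).subset ?_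
    rintro w ⟨l, hm, g, hg, hw⟩
    obtain ⟨w, rfl⟩ := (DrinfeldPoints.of Fq t a).surjective w
    exact ⟨w, ⟨l, hm, g, hg, (hiff l g w).1 hw⟩, rfl⟩
  obtain ⟨n, hn, h⟩ := exists_ne_zero_forall_not_dvd_imp_dvd_coeff hlin hfin'
  exact ⟨n, hn, fun l hm hl hln g ⟨w, hw⟩ ↦ h l hm hl hln g ⟨_, (hiff l g w).2 hw⟩⟩

lemma mul_drinfeldHom_pow_card_sub_one (t b : R) (f : Fq[X]) (x : R) :
    b * drinfeldHom t (b ^ (Fintype.card Fq - 1)) f x = drinfeldHom t 1 f (b * x) := by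
  induction f using Polynomial.induction_on with
  | C c => simp [drinfeldHom_C, mul_left_comm]
  | add f g hf hg => simp [hf, hg, mul_add]
  | monomial n c h =>
    rw [pow_succ', mul_left_comm, drinfeldHom_X_mul, drinfeldHom_X_mul, ← h, mul_pow,
      ← mul_pow_sub_one (Fintype.card_ne_zero (α := Fq)) b]
    ring

/-- The polynomial `φ_f(X)` attached to `f ∈ 𝔽_q[T]` by `drinfeldHom t a`. -/
noncomputable def drinfeldPoly (t a : R) (f : Fq[X]) : R[X] :=
  drinfeldHom (C t) (C a) f X

lemma aeval_drinfeldPoly [Algebra R S] [IsScalarTower Fq R S] (t a : R) (f : Fq[X]) (x : S) :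
    aeval x (drinfeldPoly t a f) = drinfeldHom (algebraMap R S t) (algebraMap R S a) f x := by
  simpa [drinfeldPoly] using map_drinfeldHom ((aeval x).restrictScalars Fq) (C t) (C a) f X

lemma map_drinfeldPoly (F : R →ₐ[Fq] S) (t a : R) (f : Fq[X]) :
    (drinfeldPoly t a f).map (F : R →+* S) = drinfeldPoly (F t) (F a) f := by
  simpa [drinfeldPoly] using map_drinfeldHom (mapAlgHom F) (C t) (C a) f X

lemma drinfeldPoly_C (t a : R) (c : Fq) :
    drinfeldPoly t a (C c) = C (algebraMap Fq R c) * X :=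
  drinfeldHom_C ..

lemma drinfeldPoly_add (t a : R) (f g : Fq[X]) :
    drinfeldPoly t a (f + g) = drinfeldPoly t a f + drinfeldPoly t a g := by
  simp [drinfeldPoly]

lemma drinfeldPoly_X_mul (t a : R) (f : Fq[X]) :
    drinfeldPoly t a (X * f) =
      C t * drinfeldPoly t a f + C a * drinfeldPoly t a f ^ Fintype.card Fq :=
  drinfeldHom_X_mul ..

lemma drinfeldPoly_mul_X (t a : R) (f : Fq[X]) :
    drinfeldPoly t a (f * X) =
      (drinfeldPoly t a f).comp (C t * X + C a * X ^ Fintype.card Fq) := by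
  rw [drinfeldPoly, map_mul, Module.End.mul_apply, drinfeldHom_X, ← Polynomial.algebraMap_eq,
    ← aeval_drinfeldPoly, comp, aeval_def, Polynomial.algebraMap_eq]

lemma derivative_drinfeldPoly (t a : R) (f : Fq[X]) :
    derivative (drinfeldPoly t a f) = C (aeval t f) := by
  have hq : (Fintype.card Fq : R[X]) = 0 := by
    rw [← map_natCast (algebraMap Fq R[X]), FiniteField.cast_card_eq_zero, map_zero]
  induction f using Polynomial.induction_on with
  | C c => simp [drinfeldPoly_C]
  | add f g hf hg => simp [drinfeldPoly_add, hf, hg]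
  | monomial n c h =>
    rw [pow_succ', mul_left_comm, drinfeldPoly_X_mul]
    simp [derivative_pow, hq, h]

lemma pow_card_mem_span_X_pow_card_pow {p : R[X]}
    (hp : p ∈ Submodule.span R (Set.range fun j ↦ (X : R[X]) ^ Fintype.card Fq ^ j)) :
    p ^ Fintype.card Fq ∈
      Submodule.span R (Set.range fun j ↦ (X : R[X]) ^ Fintype.card Fq ^ j) := by
  rw [← FiniteField.frobeniusAlgHom_apply Fq R[X]]
  induction hp using Submodule.span_induction with
  | mem p hp =>
    obtain ⟨j, rfl⟩ := hp
    rw [FiniteField.frobeniusAlgHom_apply, ← pow_mul, ← pow_succ]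
    exact Submodule.subset_span ⟨j + 1, rfl⟩
  | zero => rw [map_zero]; exact Submodule.zero_mem _
  | add p p' _ _ hp hp' => rw [map_add]; exact Submodule.add_mem _ hp hp'
  | smul r p _ hp =>
    rw [FiniteField.frobeniusAlgHom_apply, _root_.smul_pow,
      ← FiniteField.frobeniusAlgHom_apply Fq R[X] p]
    exact Submodule.smul_mem _ _ hp

lemma drinfeldPoly_mem_span_X_pow_card_pow (t a : R) (f : Fq[X]) :
    drinfeldPoly t a f ∈
      Submodule.span R (Set.range fun j ↦ (X : R[X]) ^ Fintype.card Fq ^ j) := by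
  induction f using Polynomial.induction_on with
  | C c =>
    rw [drinfeldPoly_C, ← smul_eq_C_mul]
    exact Submodule.smul_mem _ _ (Submodule.subset_span ⟨0, by simp⟩)
  | add f g hf hg => exact drinfeldPoly_add t a f g ▸ Submodule.add_mem _ hf hg
  | monomial n c h =>
    rw [pow_succ', mul_left_comm, drinfeldPoly_X_mul, ← smul_eq_C_mul, ← smul_eq_C_mul (a := a)]
    exact Submodule.add_mem _ (Submodule.smul_mem _ _ h)
      (Submodule.smul_mem _ _ (pow_card_mem_span_X_pow_card_pow h))

lemma exists_eq_card_pow_of_coeff_drinfeldPoly_ne_zero {t a : R} {f : Fq[X]} {n : ℕ}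
    (hn : (drinfeldPoly t a f).coeff n ≠ 0) : ∃ j, n = Fintype.card Fq ^ j := by
  contrapose! hn
  have hle : Submodule.span R (Set.range fun j ↦ (X : R[X]) ^ Fintype.card Fq ^ j) ≤
      (lcoeff R n).ker := by
    rw [Submodule.span_le]
    rintro _ ⟨j, rfl⟩
    simp [coeff_X_pow, hn j]
  exact hle (drinfeldPoly_mem_span_X_pow_card_pow t a f)

lemma natDegree_drinfeldPoly_le (t a : R) {f : Fq[X]} {n : ℕ} (hf : f.natDegree ≤ n) :
    (drinfeldPoly t a f).natDegree ≤ Fintype.card Fq ^ n := by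
  have hX (c : Fq) : (drinfeldPoly t a (C c)).natDegree ≤ 1 :=
    drinfeldPoly_C t a c ▸ (natDegree_C_mul_le _ _).trans natDegree_X_le
  have hq (n : ℕ) : 1 ≤ Fintype.card Fq ^ n := Nat.one_le_pow _ _ Fintype.card_pos
  induction n generalizing f with
  | zero => exact eq_C_of_natDegree_le_zero hf ▸ (hX _).trans (hq 0)
  | succ n ih =>
    have hP := ih (natDegree_divX_eq_natDegree_tsub_one.trans_le (Nat.sub_le_of_le_add hf))
    have hPq : (drinfeldPoly t a f.divX ^ Fintype.card Fq).natDegree ≤ Fintype.card Fq ^ (n + 1) :=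
      (natDegree_pow_le_of_le _ hP).trans_eq (pow_succ' ..).symm
    have hP' := hP.trans (Nat.pow_le_pow_right Fintype.card_pos n.le_succ)
    rw [← X_mul_divX_add f, drinfeldPoly_add, drinfeldPoly_X_mul]
    exact natDegree_add_le_of_degree_le
      (natDegree_add_le_of_degree_le ((natDegree_C_mul_le _ _).trans hP')
        ((natDegree_C_mul_le _ _).trans hPq)) ((hX _).trans (hq _))

lemma isMonicOfDegree_drinfeldPoly [Nontrivial R] (t : R) {f : Fq[X]} {n : ℕ}
    (hf : f.IsMonicOfDegree n) : (drinfeldPoly t 1 f).IsMonicOfDegree (Fintype.card Fq ^ n) := by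
  induction n generalizing f with
  | zero =>
    rw [isMonicOfDegree_zero_iff.1 hf, ← C_1, drinfeldPoly_C]
    simpa using isMonicOfDegree_X R
  | succ n ih =>
    have hP := ih (isMonicOfDegree_divX hf)
    rw [← X_mul_divX_add f, drinfeldPoly_add, drinfeldPoly_X_mul, drinfeldPoly_C, C_1, one_mul,
      add_right_comm, pow_succ]
    have hq : 1 < Fintype.card Fq := Fintype.one_lt_card
    refine IsMonicOfDegree.add_left ?_ (hP.pow _)
    calc (C t * drinfeldPoly t 1 f.divX + C (algebraMap Fq R (f.coeff 0)) * X).natDegree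
        ≤ Fintype.card Fq ^ n :=
          natDegree_add_le_of_degree_le ((natDegree_C_mul_le _ _).trans_eq hP.natDegree_eq)
            ((natDegree_C_mul_le _ _).trans (natDegree_X_le.trans (Nat.one_le_pow _ _ hq.pos)))
      _ < Fintype.card Fq ^ n * Fintype.card Fq :=
          lt_mul_of_one_lt_right (pow_pos hq.pos n) hq

end DrinfeldHom

section Carlitz

variable {Fq : Type*} [Field Fq] [Fintype Fq]

lemma coeff_zero_drinfeldPoly {R : Type*} [CommRing R] [Algebra Fq R] (t a : R) (f : Fq[X]) :
    (drinfeldPoly t a f).coeff 0 = 0 := by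
  by_contra h
  obtain ⟨j, hj⟩ := exists_eq_card_pow_of_coeff_drinfeldPoly_ne_zero h
  exact (pow_pos Fintype.card_pos j).ne hj

lemma coeff_one_drinfeldPoly {R : Type*} [CommRing R] [Algebra Fq R] (t a : R) (f : Fq[X]) :
    (drinfeldPoly t a f).coeff 1 = aeval t f := by
  simpa [coeff_derivative] using congrArg (coeff · 0) (derivative_drinfeldPoly t a f)

/-- Compare the lowest-order terms of `φ_f(φ_T(X))` and `φ_T(φ_f(X))`. -/
lemma pow_natTrailingDegree_drinfeldPoly {F : Type*} [Field F] [Algebra Fq F] (t a : F)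
    {f : Fq[X]} (hf : drinfeldPoly t a f ≠ 0) :
    t ^ (drinfeldPoly t a f).natTrailingDegree = t := by
  set n := (drinfeldPoly t a f).natTrailingDegree with hn
  have hn0 : n ≠ 0 := natTrailingDegree_ne_zero.2 ⟨hf, coeff_zero_drinfeldPoly t a f⟩
  obtain ⟨r, hr⟩ : X ^ n ∣ drinfeldPoly t a f :=
    X_pow_dvd_iff.2 fun _ ↦ coeff_eq_zero_of_lt_natTrailingDegree
  have hr0 : r.coeff 0 ≠ 0 := by
    have h := coeff_natTrailingDegree_ne_zero.2 hf
    rwa [← hn, hr, coeff_X_pow_mul', if_pos le_rfl, Nat.sub_self] at h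
  have hq : Fintype.card Fq - 1 ≠ 0 := Nat.sub_ne_zero_of_lt Fintype.one_lt_card
  have hφT : C t * X + C a * X ^ Fintype.card Fq =
      X * (C t + C a * X ^ (Fintype.card Fq - 1)) := by
    rw [← mul_pow_sub_one Fintype.card_ne_zero X]; ring
  have hcomm : X ^ n * (C t * r + C a * r ^ Fintype.card Fq * (X ^ n) ^ (Fintype.card Fq - 1)) =
      X ^ n * ((C t + C a * X ^ (Fintype.card Fq - 1)) ^ n *
        r.comp (X * (C t + C a * X ^ (Fintype.card Fq - 1)))) := by
    have h : drinfeldPoly t a (X * f) = drinfeldPoly t a (f * X) := by rw [X_mul]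
    rw [drinfeldPoly_X_mul, drinfeldPoly_mul_X, hr, mul_comp, X_pow_comp, mul_pow,
      ← mul_pow_sub_one Fintype.card_ne_zero (X ^ n)] at h
    rw [hφT, mul_pow] at h
    linear_combination h
  simpa [hn0, hq, eval_comp, ← coeff_zero_eq_eval_zero, hr0, eq_comm] using
    congrArg (eval 0) (mul_left_cancel₀ (pow_ne_zero n X_ne_zero) hcomm)

lemma coeff_drinfeldPoly_root_eq_zero {l : Fq[X]} [Fact (Irreducible l)] (a : AdjoinRoot l)
    {n : ℕ} (hn : n < Fintype.card Fq ^ l.natDegree) :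
    (drinfeldPoly (AdjoinRoot.root l) a l).coeff n = 0 := by
  by_contra h
  have hP : drinfeldPoly (AdjoinRoot.root l) a l ≠ 0 := by rintro hP; simp [hP] at h
  obtain ⟨j, hj⟩ :=
    exists_eq_card_pow_of_coeff_drinfeldPoly_ne_zero (coeff_natTrailingDegree_ne_zero.2 hP)
  have hj0 : j ≠ 0 := by
    rintro rfl
    refine coeff_natTrailingDegree_ne_zero.2 hP ?_
    rw [hj, pow_zero, coeff_one_drinfeldPoly, AdjoinRoot.aeval_eq, AdjoinRoot.mk_self]
  have hdvd : l ∣ X ^ Nat.card Fq ^ j - X := by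
    rw [← AdjoinRoot.mk_eq_zero, map_sub, map_pow, AdjoinRoot.mk_X, Nat.card_eq_fintype_card,
      ← hj, pow_natTrailingDegree_drinfeldPoly _ _ hP, sub_self]
  refine hn.not_ge ((Nat.pow_le_pow_right Fintype.card_pos (Nat.le_of_dvd hj0.bot_lt
    (Fact.out (p := Irreducible l).natDegree_dvd_of_dvd_X_pow_card_pow_sub_X hdvd))).trans ?_)
  exact hj ▸ natTrailingDegree_le_of_ne_zero h

lemma dvd_coeff_drinfeldPoly {l : Fq[X]} (hl : Irreducible l) (a : Fq[X]) {n : ℕ}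
    (hn : n < Fintype.card Fq ^ l.natDegree) : l ∣ (drinfeldPoly X a l).coeff n := by
  have := Fact.mk hl
  have h := congrArg (coeff · n) (map_drinfeldPoly (AdjoinRoot.mkₐ l) X a l)
  simp only [AdjoinRoot.coe_mkₐ, AdjoinRoot.mk_X, AdjoinRoot.mkₐ_toRingHom, coeff_map,
    coeff_drinfeldPoly_root_eq_zero _ hn] at h
  exact AdjoinRoot.mk_eq_zero.1 h

lemma isMonicOfDegree_divX_drinfeldPoly {R : Type*} [CommRing R] [Nontrivial R] [Algebra Fq R]
    (t : R) {f : Fq[X]} (hf : f.Monic) :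
    (drinfeldPoly t 1 f).divX.IsMonicOfDegree (Fintype.card Fq ^ f.natDegree - 1) :=
  isMonicOfDegree_divX <| by
    rw [Nat.sub_add_cancel (Nat.one_le_pow _ _ Fintype.card_pos)]
    exact isMonicOfDegree_drinfeldPoly t ⟨rfl, hf⟩

lemma isEisensteinAt_divX_drinfeldPoly {l : Fq[X]} (hl : l.Monic) (hi : Irreducible l) :
    (drinfeldPoly (X : Fq[X]) 1 l).divX.IsEisensteinAt (Ideal.span {l}) := by
  have hP := isMonicOfDegree_divX_drinfeldPoly (X : Fq[X]) hl
  refine ⟨?_, fun {n} hn ↦ ?_, ?_⟩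
  · rw [hP.leadingCoeff_eq, Ideal.mem_span_singleton]
    exact fun h ↦ hi.not_isUnit (isUnit_of_dvd_one h)
  · rw [hP.natDegree_eq] at hn
    rw [coeff_divX, Ideal.mem_span_singleton]
    exact dvd_coeff_drinfeldPoly hi 1 (Nat.add_lt_of_lt_sub hn)
  · rw [coeff_divX, coeff_one_drinfeldPoly, aeval_X_left_apply, Ideal.span_singleton_pow,
      Ideal.mem_span_singleton]
    intro h
    have : 2 ≤ 1 := (pow_dvd_pow_iff hi.ne_zero hi.not_isUnit).1 (by rwa [pow_one])
    lia

lemma irreducible_divX_drinfeldPoly {l : Fq[X]} (hl : l.Monic) (hi : Irreducible l) :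
    Irreducible (drinfeldPoly (X : Fq[X]) 1 l).divX := by
  have hP := isMonicOfDegree_divX_drinfeldPoly (X : Fq[X]) hl
  refine (isEisensteinAt_divX_drinfeldPoly hl hi).irreducible
    ((Ideal.span_singleton_prime hi.ne_zero).2 hi.prime) hP.monic.isPrimitive ?_
  rw [hP.natDegree_eq, Nat.sub_pos_iff_lt]
  exact Nat.one_lt_pow hi.natDegree_pos.ne' Fintype.one_lt_card

lemma natDegree_minpoly_of_carlitz_eq_zero (k : Type*) {K : Type*} [Field k] [Algebra Fq[X] k]
    [IsFractionRing Fq[X] k] [Field K] [Algebra k K] [Algebra Fq K] [Algebra Fq[X] K]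
    [IsScalarTower Fq[X] k K] [IsScalarTower Fq Fq[X] K]
    {l : Fq[X]} (hl : l.Monic) (hi : Irreducible l) {u : K}
    (hu : drinfeldHom (algebraMap Fq[X] K X) 1 l u = 0) (hu0 : u ≠ 0) :
    (minpoly k u).natDegree = Fintype.card Fq ^ l.natDegree - 1 := by
  have hP := isMonicOfDegree_divX_drinfeldPoly (X : Fq[X]) hl
  have hroot : aeval u (drinfeldPoly (X : Fq[X]) 1 l).divX = 0 := by
    rw [← map_one (algebraMap Fq[X] K), ← aeval_drinfeldPoly,
      ← X_mul_divX_add (drinfeldPoly _ _ _), coeff_zero_drinfeldPoly] at hu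
    simpa [hu0] using hu
  have hirr := hP.monic.irreducible_iff_irreducible_map_fraction_map (K := k) |>.1
    (irreducible_divX_drinfeldPoly hl hi)
  rw [← minpoly.eq_of_irreducible_of_monic hirr (by rwa [aeval_map_algebraMap]) (hP.monic.map _),
    hP.monic.natDegree_map, hP.natDegree_eq]

end Carlitz

section Torsion

variable {Fq F K : Type*} [Field Fq] [Fintype Fq] [Field F] [Algebra Fq F] [Field K] [Algebra Fq K]
  {f : Fq[X]}

lemma setOf_drinfeldHom_eq_zero {t : F} (a : F) (hf : aeval t f ≠ 0) :
    {x : F | drinfeldHom t a f x = 0} = (drinfeldPoly t a f).rootSet F := by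
  have hP : drinfeldPoly t a f ≠ 0 := fun hP ↦ hf <| by
    rw [← coeff_one_drinfeldPoly t a, hP, coeff_zero]
  ext x
  simp [mem_rootSet, hP, aeval_drinfeldPoly]

lemma finite_setOf_drinfeldHom_eq_zero {t : F} (a : F) (hf : aeval t f ≠ 0) :
    {x : F | drinfeldHom t a f x = 0}.Finite :=
  setOf_drinfeldHom_eq_zero a hf ▸ rootSet_finite _ F

lemma ncard_setOf_drinfeldHom_eq_zero_le {t : F} (a : F) (hf : aeval t f ≠ 0) :
    {x : F | drinfeldHom t a f x = 0}.ncard ≤ Fintype.card Fq ^ f.natDegree :=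
  setOf_drinfeldHom_eq_zero a hf ▸
    (ncard_rootSet_le _ F).trans (natDegree_drinfeldPoly_le t a le_rfl)

lemma isSeparable_of_drinfeldHom_eq [Algebra F K] [IsScalarTower Fq F K] {t a y : F}
    (hf : aeval t f ≠ 0) {x : K}
    (hx : drinfeldHom (algebraMap F K t) (algebraMap F K a) f x = algebraMap F K y) :
    IsSeparable F x := by
  have hderiv : derivative (drinfeldPoly t a f - C y) = C (aeval t f) := by
    rw [derivative_sub, derivative_drinfeldPoly, derivative_C, sub_zero]
  refine Separable.of_dvd (f := drinfeldPoly t a f - C y) ?_ (minpoly.dvd F x ?_)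
  · rw [separable_def, hderiv]
    exact (isCoprime_zero_left.2 (isUnit_C.2 hf.isUnit)).of_isCoprime_of_dvd_left (dvd_zero _)
  · rw [map_sub, aeval_drinfeldPoly, aeval_C, hx, sub_self]

lemma drinfeldHom_surjective [IsAlgClosed F] {t : F} (a : F) (hf : aeval t f ≠ 0) :
    Function.Surjective (drinfeldHom t a f) := fun y ↦ by
  obtain ⟨x, hx⟩ := IsAlgClosed.exists_root (drinfeldPoly t a f - C y) fun hdeg ↦ by
    have h := congrArg derivative (eq_C_of_degree_eq_zero hdeg)
    rw [derivative_sub, derivative_drinfeldPoly, derivative_C, derivative_C, sub_zero,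
      C_eq_zero] at h
    exact hf h
  refine ⟨x, sub_eq_zero.1 ?_⟩
  simpa [aeval_drinfeldPoly, ← coe_aeval_eq_eval] using hx

lemma exists_ne_zero_pow_card_sub_one_eq (Fq : Type*) [Field Fq] [Fintype Fq] [IsAlgClosed F]
    {a : F} (ha : a ≠ 0) : ∃ b : F, b ≠ 0 ∧ b ^ (Fintype.card Fq - 1) = a := by
  have hq : 0 < Fintype.card Fq - 1 := Nat.sub_pos_of_lt Fintype.one_lt_card
  obtain ⟨b, rfl⟩ := IsAlgClosed.exists_pow_nat_eq a hq
  exact ⟨b, ne_zero_pow hq.ne' ha, rfl⟩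

lemma exists_ne_zero_drinfeldHom_eq_zero [IsAlgClosed F] {t a : F} (ha : a ≠ 0) (hm : f.Monic)
    (hd : f.natDegree ≠ 0) (hf : aeval t f ≠ 0) : ∃ u : F, u ≠ 0 ∧ drinfeldHom t a f u = 0 := by
  have hq : 1 < Fintype.card Fq := Fintype.one_lt_card
  obtain ⟨b, hb, rfl⟩ := exists_ne_zero_pow_card_sub_one_eq Fq ha
  have hP := isMonicOfDegree_divX_drinfeldPoly t hm
  obtain ⟨u, hu⟩ := IsAlgClosed.exists_root (drinfeldPoly t 1 f).divX fun hdeg ↦ by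
    have := hP.natDegree_eq
    rw [natDegree_eq_of_degree_eq_some hdeg] at this
    exact (Nat.sub_pos_of_lt (Nat.one_lt_pow hd hq)).ne this
  have hu0 : u ≠ 0 := fun hu0 ↦ hf <| by
    rwa [hu0, IsRoot, ← coeff_zero_eq_eval_zero, coeff_divX, coeff_one_drinfeldPoly] at hu
  refine ⟨b⁻¹ * u, mul_ne_zero (inv_ne_zero hb) hu0, mul_left_cancel₀ hb ?_⟩
  rw [mul_drinfeldHom_pow_card_sub_one, mul_inv_cancel_left₀ hb, mul_zero]
  calc drinfeldHom t 1 f u = aeval u (drinfeldPoly t 1 f) := by simp [aeval_drinfeldPoly]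
    _ = 0 := by
      rw [← X_mul_divX_add (drinfeldPoly t 1 f), coeff_zero_drinfeldPoly]
      simp [coe_aeval_eq_eval, hu.eq_zero]

end Torsion

section Valuation

variable {Fq K Γ₀ : Type*} [Field Fq] [Fintype Fq] [Field K] [Algebra Fq K]
  [LinearOrderedCommGroupWithZero Γ₀] (v : Valuation K Γ₀)

lemma valuation_drinfeldHom_le {t x : K} {ρ : Γ₀} (hρ : 1 ≤ ρ) (ht : v t ≤ ρ) (hx : v x ≤ ρ)
    {f : Fq[X]} {n : ℕ} (hf : f.natDegree ≤ n) :
    v (drinfeldHom t 1 f x) ≤ ρ ^ Fintype.card Fq ^ n := by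
  have hconst (c : Fq) : v (algebraMap Fq K c * x) ≤ ρ := by
    rw [map_mul, ← one_mul ρ]
    exact mul_le_mul' (FiniteField.valuation_algebraMap_le_one v c) hx
  have hq : 2 ≤ Fintype.card Fq := Fintype.one_lt_card
  induction n generalizing f with
  | zero =>
    rw [eq_C_of_natDegree_le_zero hf, drinfeldHom_C, pow_zero, pow_one]
    exact hconst _
  | succ n ih =>
    have hy := ih (f := f.divX) (by rw [natDegree_divX_eq_natDegree_tsub_one]; lia)
    have hρn : ρ ≤ ρ ^ Fintype.card Fq ^ n := le_self_pow hρ (by positivity)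
    rw [← X_mul_divX_add f, map_add, LinearMap.add_apply, drinfeldHom_X_mul, drinfeldHom_C, one_mul,
      pow_succ, pow_mul]
    refine v.map_add_le (v.map_add_le ?_ ?_) ?_
    · calc v (t * drinfeldHom t 1 f.divX x)
          ≤ ρ ^ Fintype.card Fq ^ n * ρ ^ Fintype.card Fq ^ n := by
            rw [map_mul]; exact mul_le_mul' (ht.trans hρn) hy
        _ ≤ (ρ ^ Fintype.card Fq ^ n) ^ Fintype.card Fq := by
            rw [← sq]; exact pow_le_pow_right₀ (hρ.trans hρn) hq
    · rw [map_pow]; exact pow_le_pow_left' hy _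
    · exact (hconst _).trans (hρn.trans (le_self_pow (hρ.trans hρn) (by lia)))

lemma valuation_drinfeldHom_eq {t x : K} (hx : 1 < v x) (ht : v t < v x) {f : Fq[X]} {n : ℕ}
    (hf : f.IsMonicOfDegree n) : v (drinfeldHom t 1 f x) = v x ^ Fintype.card Fq ^ n := by
  have hq : 2 ≤ Fintype.card Fq := Fintype.one_lt_card
  induction n generalizing f with
  | zero => simp [isMonicOfDegree_zero_iff.1 hf]
  | succ n ih =>
    set y := drinfeldHom t 1 f.divX x with hy_def
    have hy : v y = v x ^ Fintype.card Fq ^ n := ih (isMonicOfDegree_divX hf)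
    have hxy : v x ≤ v y := hy ▸ le_self_pow hx.le (by positivity)
    have hy1 : 1 < v y := hx.trans_le hxy
    have hlin : v (t * y) < v (y ^ Fintype.card Fq) := by
      calc v (t * y) < v y * v y := by
            rw [map_mul]; exact mul_lt_mul_of_pos_right (ht.trans_le hxy) (zero_lt_one.trans hy1)
        _ ≤ v (y ^ Fintype.card Fq) := by
            rw [map_pow, ← sq]; exact pow_le_pow_right₀ hy1.le hq
    have hconst : v (algebraMap Fq K (f.coeff 0) * x) < v (y ^ Fintype.card Fq) := by
      calc v (algebraMap Fq K (f.coeff 0) * x) ≤ v y := by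
            rw [map_mul]
            exact (mul_le_of_le_one_left' (FiniteField.valuation_algebraMap_le_one v _)).trans hxy
        _ < v (y ^ Fintype.card Fq) := by
            rw [map_pow]; exact lt_self_pow₀ hy1 (by lia)
    rw [← X_mul_divX_add f, map_add, LinearMap.add_apply, drinfeldHom_X_mul, drinfeldHom_C, one_mul,
      ← hy_def, add_right_comm, v.map_add_eq_of_lt_right (v.map_add_lt hlin hconst), map_pow, hy,
      pow_succ, pow_mul]

variable {v} in
lemma valuation_mul_le_one_of_drinfeldHom_eq_sum {ι : Type*} [Fintype ι] {t s w : K} {x : ι → K}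
    (hs : v s ≤ 1) (hst : v (s * t) ≤ 1) (hsx : ∀ i, v (s * x i) ≤ 1) {l : Fq[X]} (hl : l.Monic)
    {g : ι → Fq[X]} (hg : ∀ i, (g i).natDegree ≤ l.natDegree)
    (hw : drinfeldHom t 1 l w = ∑ i, drinfeldHom t 1 (g i) (x i)) : v (s * w) ≤ 1 := by
  obtain rfl | hs0 := eq_or_ne s 0
  · simp
  have hvs : 0 < v s := (v.pos_iff).2 hs0
  have hiff (y : K) : v (s * y) ≤ 1 ↔ v y ≤ (v s)⁻¹ := by
    rw [map_mul, ← le_inv_mul_iff₀ hvs, mul_one]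
  have hρ : 1 ≤ (v s)⁻¹ := (one_le_inv₀ hvs).2 hs
  simp only [hiff] at *
  by_contra! hvw
  have hlarge := valuation_drinfeldHom_eq v (hρ.trans_lt hvw) (hst.trans_lt hvw) ⟨rfl, hl⟩
  have hsmall : v (∑ i, drinfeldHom t 1 (g i) (x i)) ≤ (v s)⁻¹ ^ Fintype.card Fq ^ l.natDegree :=
    v.map_sum_le fun i _ ↦ valuation_drinfeldHom_le v hρ hst (hsx i) (hg i)
  rw [← hw, hlarge] at hsmall
  exact hsmall.not_gt (pow_lt_pow_left₀ hvw zero_le (by positivity))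

lemma isIntegral_of_forall_mem_valuationSubring {B K : Type*} [CommRing B] [Field K] [Algebra B K]
    {x : K} (h : ∀ V : ValuationSubring K, (∀ y, IsIntegral B y → y ∈ V) → x ∈ V) :
    IsIntegral B x := by
  by_contra hx
  obtain ⟨V, hV, hxV⟩ := Subring.exists_le_valuationSubring_of_isIntegrallyClosedIn
    (R := (integralClosure B K).toSubring) hx
  exact hxV (h V hV)

lemma isIntegral_mul_of_drinfeldHom_eq_sum (B : Type*) [CommRing B] [Algebra B K] {ι : Type*}
    [Fintype ι] {t s w : K} {x : ι → K} (hs : IsIntegral B s) (hst : IsIntegral B (s * t))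
    (hsx : ∀ i, IsIntegral B (s * x i)) {l : Fq[X]} (hl : l.Monic) {g : ι → Fq[X]}
    (hg : ∀ i, (g i).natDegree ≤ l.natDegree)
    (hw : drinfeldHom t 1 l w = ∑ i, drinfeldHom t 1 (g i) (x i)) : IsIntegral B (s * w) :=
  isIntegral_of_forall_mem_valuationSubring fun V hV ↦ by
    simp only [← V.valuation_le_one_iff] at hV ⊢
    exact valuation_mul_le_one_of_drinfeldHom_eq_sum (hV _ hs) (hV _ hst) (fun i ↦ hV _ (hsx i))
      hl hg hw

end Valuation

section Northcott

variable {F : Type*} [Field F]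

open scoped Classical in
/-- The valuation ring of `F(T)` at the place `∞`, where `T⁻¹` is a uniformizer. -/
noncomputable def ratFuncIntegersAtInfty (F : Type*) [Field F] : ValuationSubring (RatFunc F) :=
  (RatFunc.inftyValuation F).valuationSubring

lemma mem_ratFuncIntegersAtInfty_iff {x : RatFunc F} :
    x ∈ ratFuncIntegersAtInfty F ↔ x.intDegree ≤ 0 := by
  classical
  obtain rfl | hx := eq_or_ne x 0
  · simp
  rw [ratFuncIntegersAtInfty, Valuation.mem_valuationSubring_iff, RatFunc.inftyValuation_apply,
    RatFunc.inftyValuation_of_nonzero F hx, ← WithZero.exp_zero, WithZero.exp_le_exp]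

lemma intDegree_pow (x : RatFunc F) (n : ℕ) : (x ^ n).intDegree = n * x.intDegree := by
  obtain rfl | hx := eq_or_ne x 0
  · cases n <;> simp
  induction n with
  | zero => simp
  | succ n ih => rw [pow_succ, RatFunc.intDegree_mul (pow_ne_zero n hx) hx, ih]; push_cast; ring

lemma finite_setOf_natDegree_le [Finite F] (n : ℕ) : {f : F[X] | f.natDegree ≤ n}.Finite := by
  have : Finite (degreeLT F (n + 1)) := Module.finite_of_finite F
  refine (Set.toFinite (degreeLT F (n + 1) : Set F[X])).subset fun f hf ↦ ?_
  exact mem_degreeLT.2 (degree_le_natDegree.trans_lt (by exact_mod_cast Nat.lt_succ_of_le hf))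

variable {K : Type*} [Field K] [Algebra (RatFunc F) K] [Algebra F[X] K]
  [IsScalarTower F[X] (RatFunc F) K]

lemma natDegree_coeff_minpoly_le {t : RatFunc F} (ht : t ≠ 0) {n : ℕ} {u : K}
    (hn : (minpoly (RatFunc F) u).natDegree ≤ n) (hu : IsIntegral F[X] u)
    (hinfty : IsIntegral (ratFuncIntegersAtInfty F) (t • u)) (i : ℕ) :
    ((minpoly F[X] u).coeff i).natDegree ≤ n * t.intDegree.natAbs := by
  set c := (minpoly F[X] u).coeff i
  obtain hc | hc := eq_or_ne c 0
  · simp [hc]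
  set m := (minpoly (RatFunc F) u).natDegree - i
  have hcoeff : algebraMap F[X] (RatFunc F) c * t ^ m =
      algebraMap _ _ ((minpoly (ratFuncIntegersAtInfty F) (t • u)).coeff i) := by
    calc algebraMap F[X] (RatFunc F) c * t ^ m
        = (minpoly (RatFunc F) u).coeff i * t ^ m := by
          rw [minpoly.isIntegrallyClosed_eq_field_fractions' (RatFunc F) hu, coeff_map]
      _ = (minpoly (RatFunc F) (t • u)).coeff i := by
          rw [IsIntegrallyClosed.minpoly_smul ht hu.tower_top, coeff_scaleRoots]
      _ = _ := by
          rw [minpoly.isIntegrallyClosed_eq_field_fractions' (RatFunc F) hinfty, coeff_map]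
  have hdeg : (c.natDegree : ℤ) + m * t.intDegree ≤ 0 := by
    rw [← intDegree_pow, ← RatFunc.intDegree_polynomial, ← RatFunc.intDegree_mul
      ((map_ne_zero_iff _ (RatFunc.algebraMap_injective F)).2 hc) (pow_ne_zero m ht), hcoeff]
    exact mem_ratFuncIntegersAtInfty_iff.1 (SetLike.coe_mem _)
  zify
  calc (c.natDegree : ℤ) ≤ m * -t.intDegree := by linarith
    _ ≤ m * |t.intDegree| := by gcongr; exact neg_le_abs _
    _ ≤ n * |t.intDegree| := by gcongr; lia

/-- A form of Northcott's theorem. -/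
lemma finite_setOf_isIntegral_smul [Finite F] {d s : RatFunc F} (hd : d ≠ 0) (hs : s ≠ 0)
    (n : ℕ) :
    {w : K | (minpoly (RatFunc F) w).natDegree ≤ n ∧ IsIntegral F[X] (d • w) ∧
      IsIntegral (ratFuncIntegersAtInfty F) (s • w)}.Finite := by
  classical
  have hroots := bUnion_roots_finite (algebraMap F[X] K) n
    (finite_setOf_natDegree_le (n * (s / d).intDegree.natAbs))
  refine (hroots.preimage (smul_right_injective K hd).injOn).subset ?_
  rintro w ⟨hn, hfin, hinfty⟩
  have hw : w = d⁻¹ • (d • w) := (inv_smul_smul₀ hd w).symm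
  rw [hw, IsIntegrallyClosed.minpoly_smul (inv_ne_zero hd) hfin.tower_top,
    natDegree_scaleRoots] at hn
  rw [hw, smul_smul, ← div_eq_mul_inv] at hinfty
  simp only [Set.mem_preimage, Set.mem_iUnion]
  refine ⟨minpoly F[X] (d • w), ⟨?_, natDegree_coeff_minpoly_le (div_ne_zero hs hd) hn hfin hinfty⟩,
    mem_rootSet'.2 ⟨((minpoly.monic hfin).map _).ne_zero, minpoly.aeval _ _⟩⟩
  rwa [minpoly.isIntegrallyClosed_eq_field_fractions' (RatFunc F) hfin,
    (minpoly.monic hfin).natDegree_map] at hn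

lemma exists_smul_isIntegral {B k K ι : Type*} [Finite ι] [CommRing B] [IsDomain B] [Field k]
    [Algebra B k] [IsFractionRing B k] [Field K] [Algebra k K] [Algebra B K] [IsScalarTower B k K]
    [Algebra.IsAlgebraic k K] (x : ι → K) :
    ∃ s : B, s ≠ 0 ∧ ∀ i, IsIntegral B (algebraMap B K s * x i) := by
  classical
  have := Fintype.ofFinite ι
  have : Algebra.IsAlgebraic B K := (IsFractionRing.comap_isAlgebraic_iff (K := k)).2 inferInstance
  obtain ⟨s, hs0, hs⟩ := Algebra.IsAlgebraic.exists_integral_multiples B (Finset.univ.image x)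
  refine ⟨s, hs0, fun i ↦ ?_⟩
  rw [← Algebra.smul_def]
  exact hs _ (Finset.mem_image_of_mem x (Finset.mem_univ i))

variable [Fintype F] [Algebra F K] [Algebra.IsAlgebraic (RatFunc F) K]

lemma finite_setOf_drinfeldHom_eq_sum {ι : Type*} [Fintype ι] (x : ι → K) (n : ℕ) :
    {w : K | (minpoly (RatFunc F) w).natDegree ≤ n ∧ ∃ l : F[X], l.Monic ∧ ∃ g : ι → F[X],
      (∀ i, (g i).natDegree ≤ l.natDegree) ∧ drinfeldHom (algebraMap F[X] K X) 1 l w =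
        ∑ i, drinfeldHom (algebraMap F[X] K X) 1 (g i) (x i)}.Finite := by
  obtain ⟨d, hd0, hd⟩ := exists_smul_isIntegral (B := F[X]) (k := RatFunc F) x
  obtain ⟨s, hs0, hs⟩ := exists_smul_isIntegral (B := ratFuncIntegersAtInfty F) (k := RatFunc F) x
  let y : ratFuncIntegersAtInfty F :=
    ⟨RatFunc.X⁻¹, mem_ratFuncIntegersAtInfty_iff.2 (by simp [RatFunc.intDegree_inv])⟩
  have hyX : algebraMap _ K y * algebraMap F[X] K X = 1 := by
    rw [IsScalarTower.algebraMap_apply F[X] (RatFunc F), RatFunc.algebraMap_X,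
      IsScalarTower.algebraMap_apply _ (RatFunc F), ← map_mul]
    rw [show algebraMap _ _ y = (RatFunc.X : RatFunc F)⁻¹ from rfl,
      inv_mul_cancel₀ RatFunc.X_ne_zero, map_one]
  have hy0 : y ≠ 0 := by rintro h; simp [h] at hyX
  refine (finite_setOf_isIntegral_smul (d := algebraMap _ (RatFunc F) d)
    (s := algebraMap _ (RatFunc F) (y * s)) ?_ ?_ n).subset ?_
  · simpa using hd0
  · exact (map_ne_zero_iff _ (FaithfulSMul.algebraMap_injective _ _)).2 (mul_ne_zero hy0 hs0)
  rintro w ⟨hn, l, hl, g, hg, hw⟩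
  refine ⟨hn, ?_, ?_⟩
  · rw [Algebra.smul_def, ← IsScalarTower.algebraMap_apply]
    exact isIntegral_mul_of_drinfeldHom_eq_sum F[X] isIntegral_algebraMap
      (isIntegral_algebraMap.mul isIntegral_algebraMap) hd hl hg hw
  · rw [Algebra.smul_def, ← IsScalarTower.algebraMap_apply, map_mul]
    refine isIntegral_mul_of_drinfeldHom_eq_sum (ratFuncIntegersAtInfty F)
      (isIntegral_algebraMap.mul isIntegral_algebraMap) ?_ ?_ hl hg hw
    · rw [mul_right_comm, hyX, one_mul]
      exact isIntegral_algebraMap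
    · intro i
      rw [mul_assoc]
      exact isIntegral_algebraMap.mul (hs i)

end Northcott

section FieldDegrees

variable {k K : Type*} [Field k] [Field K] [Algebra k K]

lemma natDegree_minpoly_mul_le {x y : K} (hx : IsIntegral k x) (hy : IsIntegral k y) :
    (minpoly k (x * y)).natDegree ≤ (minpoly k x).natDegree * (minpoly k y).natDegree := by
  have := adjoin.finiteDimensional hx
  have := adjoin.finiteDimensional hy
  have hxy : x * y ∈ k⟮x⟯ ⊔ k⟮y⟯ :=
    mul_mem (le_sup_left (a := k⟮x⟯) (mem_adjoin_simple_self k x))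
      (le_sup_right (b := k⟮y⟯) (mem_adjoin_simple_self k y))
  calc (minpoly k (x * y)).natDegree ≤ Module.finrank k ↥(k⟮x⟯ ⊔ k⟮y⟯) :=
        minpoly_eq (⟨x * y, hxy⟩ : ↥(k⟮x⟯ ⊔ k⟮y⟯)) ▸ minpoly.natDegree_le _
    _ ≤ Module.finrank k k⟮x⟯ * Module.finrank k k⟮y⟯ := finrank_sup_le _ _
    _ = _ := by rw [adjoin.finrank hx, adjoin.finrank hy]

lemma natDegree_minpoly_le_finrank_mul {L : Type*} [Field L] [Algebra k L] [FiniteDimensional k L]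
    [Algebra L K] [IsScalarTower k L K] {y : K} (hy : IsIntegral L y) :
    (minpoly k y).natDegree ≤ Module.finrank k L * (minpoly L y).natDegree := by
  have := adjoin.finiteDimensional hy
  have := FiniteDimensional.trans k L L⟮y⟯
  have : IsScalarTower k L⟮y⟯ K := .to₁₃₄ k L L⟮y⟯ K
  rw [← adjoin.finrank hy, Module.finrank_mul_finrank, ← AdjoinSimple.algebraMap_gen L y,
    minpoly.algebraMap_eq (algebraMap L⟮y⟯ K).injective]
  exact minpoly.natDegree_le _

lemma ncard_range_galois_apply [IsGalois k K] (x : K) :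
    (Set.range fun σ : K ≃ₐ[k] K ↦ σ x).ncard = (minpoly k x).natDegree := by
  have horbit : (Set.range fun σ : K ≃ₐ[k] K ↦ σ x) = (minpoly k x).rootSet K := by
    rw [← Algebra.IsAlgebraic.range_eval_eq_rootSet_minpoly_of_splits K
      (fun y ↦ Normal.splits inferInstance y) x]
    exact (Algebra.IsAlgebraic.algEquivEquivAlgHom k K).surjective.range_comp fun ψ ↦ ψ x
  rw [horbit, ← Nat.card_coe_set_eq, Nat.card_eq_fintype_card, card_rootSet_eq_natDegree
    (Algebra.IsSeparable.isSeparable k x) (Normal.splits inferInstance x)]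

end FieldDegrees

section Galois

lemma natCard_quotient_span_singleton {Fq : Type*} [Field Fq] [Fintype Fq] {l : Fq[X]}
    (hl : l.Monic) : Nat.card (Fq[X] ⧸ Ideal.span {l}) = Fintype.card Fq ^ l.natDegree := by
  have : Module.Finite Fq (Fq[X] ⧸ Ideal.span {l}) := hl.finite_adjoinRoot
  rw [Module.natCard_eq_pow_finrank (K := Fq), finrank_quotient_span_eq_natDegree,
    Nat.card_eq_fintype_card]

variable {Fq L : Type*} [Field Fq] [Fintype Fq] [Field L] [Algebra Fq L]

lemma torsionBy_drinfeldPoints_eq_span_singleton {l : Fq[X]} [(Ideal.span {l}).IsMaximal]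
    (hm : l.Monic) {t a u : L} (hlt : aeval t l ≠ 0) (hu0 : u ≠ 0) (hu : drinfeldHom t a l u = 0) :
    Submodule.torsionBy Fq[X] (DrinfeldPoints Fq t a) l = Fq[X] ∙ DrinfeldPoints.of Fq t a u := by
  refine torsionBy_eq_span_singleton ?_ ?_ (of_mem_torsionBy_drinfeldPoints_iff.2 hu)
    ((LinearEquiv.map_ne_zero_iff _).2 hu0)
  · rw [coe_torsionBy_drinfeldPoints]
    exact (finite_setOf_drinfeldHom_eq_zero a hlt).image _
  · rw [coe_torsionBy_drinfeldPoints, natCard_quotient_span_singleton hm,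
      Set.ncard_image_of_injective _ (LinearEquiv.injective _)]
    exact ncard_setOf_drinfeldHom_eq_zero_le a hlt

section Representation

variable {E : Type*} [Field E] [Algebra Fq E] [Algebra L E] [IsScalarTower Fq L E]

variable (E) in
/-- The action of `Gal(E/L)` on the points over `E` of the Drinfeld module `drinfeldHom t a`, where
`t` and `a` belong to `L`. -/
noncomputable def galoisRep (t a : L) :
    Representation Fq[X] (E ≃ₐ[L] E) (DrinfeldPoints Fq (algebraMap L E t) (algebraMap L E a)) where
  toFun σ := LinearMap.ofAEval _
    ((DrinfeldPoints.of Fq _ _).toLinearMap ∘ₗ σ.toLinearMap.restrictScalars Fq) fun x ↦ by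
      change DrinfeldPoints.of Fq _ _ (σ _) = X • DrinfeldPoints.of Fq _ _ (σ x)
      rw [smul_of_drinfeldPoints, drinfeldHom_X]
      simp [drinfeldEnd]
  map_one' := rfl
  map_mul' _ _ := rfl

lemma galoisRep_of (t a : L) (σ : E ≃ₐ[L] E) (x : E) :
    galoisRep E t a σ (DrinfeldPoints.of Fq _ _ x) = DrinfeldPoints.of Fq _ _ (σ x) :=
  rfl

lemma of_mem_invariants_iff [IsGalois L E] {t a : L} {x : E} :
    DrinfeldPoints.of Fq _ _ x ∈ (galoisRep E t a).invariants ↔ x ∈ Set.range (algebraMap L E) :=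
  (InfiniteGalois.mem_range_algebraMap_iff_fixed x).symm

lemma ncard_range_galoisRep_of [IsGalois L E] (t a : L) (u : E) :
    (Set.range fun σ ↦ galoisRep E t a σ (DrinfeldPoints.of Fq _ _ u)).ncard =
      (minpoly L u).natDegree := by
  simp_rw [galoisRep_of]
  rw [← ncard_range_galois_apply u, ← Set.ncard_image_of_injective _
    (DrinfeldPoints.of Fq (algebraMap L E t) (algebraMap L E a)).injective, ← Set.range_comp]
  rfl

lemma exists_forall_apply_sub_eq [IsGalois L E] {ι : Type*} [Fintype ι] {t a : L} {l : Fq[X]}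
    (hm : l.Monic) (hl : Irreducible l) (hlt : aeval t l ≠ 0) {u : E} (hu0 : u ≠ 0)
    (hu : drinfeldHom (algebraMap L E t) (algebraMap L E a) l u = 0)
    (hcard : Fintype.card Fq ^ l.natDegree < (minpoly L u).natDegree ^ 2) {x : ι → L} {α : ι → E}
    (hα : ∀ i, drinfeldHom (algebraMap L E t) (algebraMap L E a) l (α i) = algebraMap L E (x i))
    (hind : ∀ g : ι → Fq[X], (∃ w, drinfeldHom t a l w = ∑ i, drinfeldHom t a (g i) (x i)) →
      ∀ i, l ∣ g i) {v : ι → E}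
    (hv : ∀ i, drinfeldHom (algebraMap L E t) (algebraMap L E a) l (v i) = 0) :
    ∃ σ : E ≃ₐ[L] E,
      (∀ y, drinfeldHom (algebraMap L E t) (algebraMap L E a) l y = 0 → σ y = y) ∧
        ∀ i, σ (α i) - α i = v i := by
  have : (Ideal.span {l}).IsMaximal := PrincipalIdealRing.isMaximal_of_irreducible hl
  have hq := natCard_quotient_span_singleton hm
  have : Finite (Fq[X] ⧸ Ideal.span {l}) :=
    Nat.finite_of_card_ne_zero (hq ▸ pow_ne_zero _ Fintype.card_ne_zero)
  have hlt' : aeval (algebraMap L E t) l ≠ 0 :=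
    (aeval_algebraMap_eq_zero_iff E t l).not.2 hlt
  have hinv (i : ι) : l • DrinfeldPoints.of Fq _ _ (α i) ∈ (galoisRep E t a).invariants := by
    rw [smul_of_drinfeldPoints, hα]
    exact of_mem_invariants_iff.2 ⟨_, rfl⟩
  have hind' (g : ι → Fq[X]) : (∃ w ∈ (galoisRep E t a).invariants,
      l • w = ∑ i, g i • l • DrinfeldPoints.of Fq _ _ (α i)) → ∀ i, l ∣ g i := by
    rintro ⟨w, hw, hlw⟩
    obtain ⟨w, rfl⟩ := (DrinfeldPoints.of Fq _ _).surjective w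
    obtain ⟨w, rfl⟩ := of_mem_invariants_iff.1 hw
    refine hind g ⟨w, (algebraMap L E).injective ?_⟩
    simp only [smul_of_drinfeldPoints, ← map_sum] at hlw
    simp only [map_sum, algebraMap_drinfeldHom, ← hα]
    exact (DrinfeldPoints.of Fq _ _).injective hlw
  obtain ⟨σ, hσ⟩ := kummerMap_surjective
    (torsionBy_drinfeldPoints_eq_span_singleton hm hlt' hu0 hu)
    (by rwa [hq, ncard_range_galoisRep_of]) hinv hind'
    fun i ↦ ⟨DrinfeldPoints.of Fq _ _ (v i), of_mem_torsionBy_drinfeldPoints_iff.2 (hv i)⟩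
  have hfix := mem_torsionFixer.1 σ.toMul.2
  have hof := (DrinfeldPoints.of Fq (algebraMap L E t) (algebraMap L E a)).injective
  refine ⟨σ.toMul, fun y hy ↦ hof ?_, fun i ↦ hof ?_⟩
  · exact hfix _ (of_mem_torsionBy_drinfeldPoints_iff.2 hy)
  · rw [map_sub]
    exact congrArg Subtype.val (congrFun hσ i)

lemma drinfeldHom_apply_sub_eq_zero {t a : L} {l : Fq[X]} {x : L} {y : E}
    (hy : drinfeldHom (algebraMap L E t) (algebraMap L E a) l y = algebraMap L E x)
    (σ : E ≃ₐ[L] E) :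
    drinfeldHom (algebraMap L E t) (algebraMap L E a) l (σ y - y) = 0 := by
  have h := map_drinfeldHom (σ.toAlgHom.restrictScalars Fq) (algebraMap L E t)
    (algebraMap L E a) l y
  simp only [hy, AlgHom.coe_restrictScalars', AlgEquiv.toAlgHom_apply, AlgEquiv.commutes] at h
  rw [map_sub, ← h, hy, sub_self]

lemma apply_eq_apply_of_drinfeldHom_eq_sum {ι : Type*} [Fintype ι] {t a : L} {l : Fq[X]}
    {σ τ : E ≃ₐ[L] E}
    (hσ : ∀ z, drinfeldHom (algebraMap L E t) (algebraMap L E a) l z = 0 → σ z = z)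
    (hτ : ∀ z, drinfeldHom (algebraMap L E t) (algebraMap L E a) l z = 0 → τ z = z)
    {α : ι → E} (hα : ∀ i, σ (α i) = τ (α i)) {y : E} {g : ι → Fq[X]}
    (hy : drinfeldHom (algebraMap L E t) (algebraMap L E a) l y = ∑ i,
      drinfeldHom (algebraMap L E t) (algebraMap L E a) (g i)
        (drinfeldHom (algebraMap L E t) (algebraMap L E a) l (α i))) : σ y = τ y := by
  set y' := ∑ i, drinfeldHom (algebraMap L E t) (algebraMap L E a) (g i) (α i) with hy'
  have htorsion : drinfeldHom (algebraMap L E t) (algebraMap L E a) l (y - y') = 0 := by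
    simp only [hy', map_sub, map_sum, hy, ← Module.End.mul_apply, ← map_mul, mul_comm, sub_self]
  have hcomm (ρ : E ≃ₐ[L] E) :
      ρ y' = ∑ i, drinfeldHom (algebraMap L E t) (algebraMap L E a) (g i) (ρ (α i)) := by
    rw [hy', map_sum]
    refine Finset.sum_congr rfl fun i _ ↦ ?_
    simpa using map_drinfeldHom (ρ.toAlgHom.restrictScalars Fq) (algebraMap L E t)
      (algebraMap L E a) (g i) (α i)
  have h := (hσ _ htorsion).trans (hτ _ htorsion).symm
  have hσy : σ y' = τ y' := by simp only [hcomm, hα]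
  rwa [map_sub, map_sub, hσy, sub_left_inj] at h

end Representation

section DivisionField

variable {K : Type*} [Field K] [Algebra Fq K] [Algebra L K] [IsScalarTower Fq L K]

lemma coe_drinfeldHom {E : IntermediateField L K} (t a : L) (f : Fq[X]) (x : E) :
    (drinfeldHom (algebraMap L E t) (algebraMap L E a) f x : K) =
      drinfeldHom (algebraMap L K t) (algebraMap L K a) f x :=
  have : IsScalarTower Fq E K := .to₁₃₄ Fq L E K
  algebraMap_drinfeldHom (S := K) (algebraMap L E t) (algebraMap L E a) f x

lemma coe_drinfeldHom_eq_zero_iff {E : IntermediateField L K} {t a : L} {f : Fq[X]} {x : E} :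
    drinfeldHom (algebraMap L K t) (algebraMap L K a) f (x : K) = 0 ↔
      drinfeldHom (algebraMap L E t) (algebraMap L E a) f x = 0 := by
  rw [← coe_drinfeldHom, ZeroMemClass.coe_eq_zero]

lemma mul_apply_sub_of_forall_torsion {E : IntermediateField L K} {t a : L} {l : Fq[X]}
    {σ : E ≃ₐ[L] E}
    (hσ : ∀ z : E, drinfeldHom (algebraMap L K t) (algebraMap L K a) l (z : K) = 0 → σ z = z)
    {x : L} {y : E}
    (hy : drinfeldHom (algebraMap L K t) (algebraMap L K a) l (y : K) = algebraMap L K x)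
    (τ : E ≃ₐ[L] E) : ((σ * τ) y : K) - y = (σ y - y) + (τ y - y) := by
  have h := congrArg Subtype.val <| hσ _ <| coe_drinfeldHom_eq_zero_iff.2 <|
    drinfeldHom_apply_sub_eq_zero (Subtype.ext ((coe_drinfeldHom ..).trans hy)) τ
  rw [map_sub, AddSubgroupClass.coe_sub, AddSubgroupClass.coe_sub] at h
  rw [AlgEquiv.mul_apply, ← h]
  abel

lemma exists_drinfeldHom_eq_of_eq_adjoin [IsAlgClosed K] {t a : L} {l : Fq[X]}
    (hlt : aeval t l ≠ 0) {Γ : Set K} {E : IntermediateField L K}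
    (hE : E = adjoin L {y : K | drinfeldHom (algebraMap L K t) (algebraMap L K a) l y ∈ Γ}) {x : K}
    (hx : x ∈ Γ) :
    ∃ y : E, drinfeldHom (algebraMap L K t) (algebraMap L K a) l (y : K) = x := by
  obtain ⟨y, rfl⟩ := drinfeldHom_surjective (algebraMap L K a)
    ((aeval_algebraMap_eq_zero_iff K t l).not.2 hlt) x
  exact ⟨⟨y, hE ▸ subset_adjoin L _ hx⟩, rfl⟩

lemma isGalois_adjoin_setOf_drinfeldHom_mem [Normal L K] {t a : L} {l : Fq[X]}
    (hlt : aeval t l ≠ 0) {Γ : Set K} (hΓ : Γ ⊆ Set.range (algebraMap L K)) :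
    IsGalois L (adjoin L {x : K | drinfeldHom (algebraMap L K t) (algebraMap L K a) l x ∈ Γ}) := by
  set D := {x : K | drinfeldHom (algebraMap L K t) (algebraMap L K a) l x ∈ Γ}
  have : Algebra.IsSeparable L (adjoin L D) := (isSeparable_adjoin_iff_isSeparable _ _).2 fun x hx ↦
    have ⟨_, hy⟩ := hΓ hx
    isSeparable_of_drinfeldHom_eq hlt hy.symm
  have : Normal L (adjoin L D) := normal_iff_forall_map_le'.2 fun σ ↦ by
    rw [adjoin_map]
    refine adjoin.mono _ _ _ ?_
    rintro _ ⟨x, hx, rfl⟩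
    obtain ⟨y, hy⟩ := hΓ hx
    have h := map_drinfeldHom (σ.toAlgHom.restrictScalars Fq) (algebraMap L K t)
      (algebraMap L K a) l x
    simp only [← hy, AlgHom.coe_restrictScalars', AlgEquiv.toAlgHom_apply, AlgEquiv.commutes] at h
    change drinfeldHom _ _ l (σ x) ∈ Γ
    rw [← h, hy]
    exact hx
  exact ⟨⟩

theorem bijOn_galois_apply_sub [Normal L K] {ι : Type*} [Fintype ι] {t a : L} {l : Fq[X]}
    (hm : l.Monic) (hl : Irreducible l) (hlt : aeval t l ≠ 0) {u : K} (hu0 : u ≠ 0)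
    (hu : drinfeldHom (algebraMap L K t) (algebraMap L K a) l u = 0)
    (hcard : Fintype.card Fq ^ l.natDegree < (minpoly L u).natDegree ^ 2)
    {Γ : AddSubgroup K} (hΓ : (Γ : Set K) ⊆ Set.range (algebraMap L K)) {x : ι → L}
    (hgen : ∀ y ∈ Γ, ∃ g : ι → Fq[X], y =
      ∑ i, drinfeldHom (algebraMap L K t) (algebraMap L K a) (g i) (algebraMap L K (x i)))
    (hind : ∀ g : ι → Fq[X], (∃ w, drinfeldHom t a l w = ∑ i, drinfeldHom t a (g i) (x i)) →
      ∀ i, l ∣ g i)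
    {E : IntermediateField L K}
    (hE : E = adjoin L {y | drinfeldHom (algebraMap L K t) (algebraMap L K a) l y ∈ Γ})
    {α : ι → E}
    (hα : ∀ i, drinfeldHom (algebraMap L K t) (algebraMap L K a) l (α i : K) =
      algebraMap L K (x i)) :
    Set.BijOn (fun (σ : E ≃ₐ[L] E) i ↦ (σ (α i) : K) - α i)
      {σ | ∀ y : E, drinfeldHom (algebraMap L K t) (algebraMap L K a) l (y : K) = 0 → σ y = y}
      {v | ∀ i, drinfeldHom (algebraMap L K t) (algebraMap L K a) l (v i) = 0} := by
  have hmem {y : K} (hy : drinfeldHom (algebraMap L K t) (algebraMap L K a) l y ∈ Γ) : y ∈ E :=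
    hE ▸ subset_adjoin L _ hy
  have htorsion {y : K} (hy : drinfeldHom (algebraMap L K t) (algebraMap L K a) l y = 0) : y ∈ E :=
    hmem (hy ▸ Γ.zero_mem)
  have : IsGalois L E := hE ▸ isGalois_adjoin_setOf_drinfeldHom_mem hlt hΓ
  have hαE (i : ι) : drinfeldHom (algebraMap L E t) (algebraMap L E a) l (α i) =
      algebraMap L E (x i) := Subtype.ext ((coe_drinfeldHom ..).trans (hα i))
  simp only [coe_drinfeldHom_eq_zero_iff]
  refine ⟨fun σ _ i ↦ ?_, fun σ hσ τ hτ h ↦ ?_, fun v hv ↦ ?_⟩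
  · exact coe_drinfeldHom_eq_zero_iff.2 (drinfeldHom_apply_sub_eq_zero (hαE i) σ)
  · have hagree (i : ι) : σ (α i) = τ (α i) := Subtype.ext (sub_left_injective (congrFun h i))
    refine AlgEquiv.coe_toAlgHom_injective (algHom_ext_of_eq_adjoin _ hE fun y hy ↦ ?_)
    obtain ⟨g, hg⟩ := hgen _ hy
    refine apply_eq_apply_of_drinfeldHom_eq_sum hσ hτ hagree (g := g) (Subtype.ext ?_)
    simp [coe_drinfeldHom, hα, hg]
  · lift v to ι → E using fun i ↦ htorsion (hv i)
    lift u to E using htorsion hu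
    obtain ⟨σ, hσ, hσα⟩ := exists_forall_apply_sub_eq hm hl hlt (by simpa using hu0)
      (coe_drinfeldHom_eq_zero_iff.1 hu) (by rwa [minpoly_eq]) hαE hind
      fun i ↦ coe_drinfeldHom_eq_zero_iff.1 (hv i)
    exact ⟨σ, hσ, funext fun i ↦ congrArg Subtype.val (hσα i)⟩

end DivisionField

end Galois

lemma exists_finset_forall_notMem_not_dvd {F : Type*} [Field F] [Finite F] {n : F[X]} (hn : n ≠ 0)
    (m : ℕ) : ∃ S : Finset F[X], ∀ l, l ∉ S → ¬ l ∣ n ∧ m ≤ l.natDegree := by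
  refine ⟨(finite_setOf_natDegree_le (n.natDegree + m)).toFinset, fun l hl ↦ ?_⟩
  have hdeg : n.natDegree + m < l.natDegree := by simpa using hl
  exact ⟨fun h ↦ by have := natDegree_le_of_dvd h hn; lia, by lia⟩

lemma aeval_algebraMap_X_ne_zero {R S : Type*} [CommRing R] [CommRing S] [Algebra R S]
    [Algebra R[X] S] [IsScalarTower R R[X] S] [FaithfulSMul R[X] S] {f : R[X]} (hf : f ≠ 0) :
    aeval (algebraMap R[X] S X) f ≠ 0 := by
  rwa [aeval_algebraMap_apply, aeval_X_left_apply, Ne, FaithfulSMul.algebraMap_eq_zero_iff]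

section FiniteExtension

variable {Fq L : Type*} [Field Fq] [Fintype Fq] [Field L] [Algebra (RatFunc Fq) L]
  [FiniteDimensional (RatFunc Fq) L] {a : L}

section Independence

variable [Algebra Fq L] [Algebra Fq[X] L] [IsScalarTower Fq[X] (RatFunc Fq) L]

/-- Over the algebraic closure of `L` the module is isomorphic to the Carlitz module, through
multiplication by a root `b` of `b ^ (q - 1) = a`. -/
lemma finite_setOf_drinfeldHom_eq_sum_of_ne_zero {ι : Type*} [Fintype ι] (ha : a ≠ 0) (x : ι → L) :
    {w : L | ∃ l : Fq[X], l.Monic ∧ ∃ g : ι → Fq[X], (∀ i, (g i).natDegree ≤ l.natDegree) ∧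
      drinfeldHom (algebraMap Fq[X] L X) a l w =
        ∑ i, drinfeldHom (algebraMap Fq[X] L X) a (g i) (x i)}.Finite := by
  obtain ⟨b, hb0, hb⟩ := exists_ne_zero_pow_card_sub_one_eq Fq
    ((_root_.map_ne_zero (algebraMap L (AlgebraicClosure L))).2 ha)
  have : Algebra.IsAlgebraic (RatFunc Fq) (AlgebraicClosure L) := .trans (RatFunc Fq) L _
  have : IsScalarTower Fq[X] (RatFunc Fq) (AlgebraicClosure L) := .to₁₂₄ _ _ L _
  have htwist (f : Fq[X]) (y : L) :
      drinfeldHom (algebraMap Fq[X] (AlgebraicClosure L) X) 1 f (b * algebraMap L _ y) =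
        b * algebraMap L _ (drinfeldHom (algebraMap Fq[X] L X) a f y) := by
    rw [algebraMap_drinfeldHom, ← hb, ← IsScalarTower.algebraMap_apply,
      mul_drinfeldHom_pow_card_sub_one]
  refine ((finite_setOf_drinfeldHom_eq_sum (F := Fq) (fun i ↦ b * algebraMap L _ (x i))
    ((minpoly (RatFunc Fq) b).natDegree * Module.finrank (RatFunc Fq) L)).preimage
      ((mul_right_injective₀ hb0).comp (algebraMap L _).injective).injOn).subset ?_
  rintro w ⟨l, hm, g, hg, hw⟩
  refine ⟨?_, l, hm, g, hg, ?_⟩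
  · refine (natDegree_minpoly_mul_le (Algebra.IsIntegral.isIntegral b)
      (Algebra.IsIntegral.isIntegral _)).trans (Nat.mul_le_mul_left _ ?_)
    rw [minpoly.algebraMap_eq (algebraMap L _).injective]
    exact minpoly.natDegree_le w
  · simp only [Function.comp_apply, htwist, hw, map_sum, Finset.mul_sum]

end Independence

lemma lt_sq_of_pred_le_mul {m n N : ℕ} (hN : m ^ 2 + 2 ≤ N) (h : N - 1 ≤ m * n) : N < n ^ 2 := by
  obtain ⟨M, rfl⟩ := Nat.exists_eq_add_of_le' (le_of_add_le_right hN)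
  by_contra! hn
  have h' : (M + 1) ^ 2 ≤ M * (M + 2) := calc
    (M + 1) ^ 2 ≤ (m * n) ^ 2 := Nat.pow_le_pow_left h 2
    _ = m ^ 2 * n ^ 2 := mul_pow ..
    _ ≤ M * (M + 2) := Nat.mul_le_mul (Nat.le_of_add_le_add_right hN) hn
  lia

theorem exists_forall_exists_card_pow_lt_natDegree_minpoly_sq (K : Type*) [Field K] [IsAlgClosed K]
    [Algebra Fq K] [Algebra Fq[X] K] [IsScalarTower Fq Fq[X] K] [Algebra (RatFunc Fq) K]
    [IsScalarTower Fq[X] (RatFunc Fq) K] [Algebra L K] [IsScalarTower (RatFunc Fq) L K]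
    [Algebra.IsAlgebraic (RatFunc Fq) K] (ha : a ≠ 0) :
    ∃ m : ℕ, ∀ l : Fq[X], l.Monic → Irreducible l → m ≤ l.natDegree → ∃ u : K, u ≠ 0 ∧
      drinfeldHom (algebraMap Fq[X] K X) (algebraMap L K a) l u = 0 ∧
        Fintype.card Fq ^ l.natDegree < (minpoly L u).natDegree ^ 2 := by
  have ha' : algebraMap L K a ≠ 0 := (_root_.map_ne_zero _).2 ha
  have : FaithfulSMul Fq[X] K := .trans Fq[X] (RatFunc Fq) K
  obtain ⟨b, hb0, hb⟩ := exists_ne_zero_pow_card_sub_one_eq Fq ha'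
  set m := (minpoly (RatFunc Fq) b).natDegree * Module.finrank (RatFunc Fq) L with hm_def
  refine ⟨m ^ 2 + 2, fun l hm hl hml ↦ ?_⟩
  obtain ⟨u, hu0, hu⟩ := exists_ne_zero_drinfeldHom_eq_zero ha' hm hl.natDegree_pos.ne'
    (aeval_algebraMap_X_ne_zero hm.ne_zero)
  refine ⟨u, hu0, hu, lt_sq_of_pred_le_mul (m := m) ?_ ?_⟩
  · exact hml.trans (Nat.lt_pow_self Fintype.one_lt_card).le
  · have hbu : drinfeldHom (algebraMap Fq[X] K X) 1 l (b * u) = 0 := by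
      rw [← mul_drinfeldHom_pow_card_sub_one, hb, hu, mul_zero]
    have hint := Algebra.IsIntegral.isIntegral (R := RatFunc Fq) u
    rw [← natDegree_minpoly_of_carlitz_eq_zero (RatFunc Fq) hm hl hbu (mul_ne_zero hb0 hu0),
      hm_def, mul_assoc]
    exact (natDegree_minpoly_mul_le (Algebra.IsIntegral.isIntegral b) hint).trans
      (Nat.mul_le_mul_left _ (natDegree_minpoly_le_finrank_mul hint.tower_top))

theorem exists_finset_forall_notMem_dvd_and_card_pow_lt (K : Type*) [Field K] [IsAlgClosed K]
    [Algebra Fq K] [Algebra Fq[X] K] [IsScalarTower Fq Fq[X] K] [Algebra (RatFunc Fq) K]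
    [IsScalarTower Fq[X] (RatFunc Fq) K] [Algebra L K] [IsScalarTower (RatFunc Fq) L K]
    [Algebra.IsAlgebraic (RatFunc Fq) K] [Algebra Fq L] [Algebra Fq[X] L]
    [IsScalarTower Fq[X] (RatFunc Fq) L] (ha : a ≠ 0) {ι : Type*} [Fintype ι] {x : ι → L}
    (hx : ∀ g : ι → Fq[X], ∑ i, drinfeldHom (algebraMap Fq[X] L X) a (g i) (x i) = 0 →
      ∀ i, g i = 0) :
    ∃ S : Finset Fq[X], ∀ l : Fq[X], l.Monic → Irreducible l → l ∉ S →
      (∀ g : ι → Fq[X], (∃ w, drinfeldHom (algebraMap Fq[X] L X) a l w =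
        ∑ i, drinfeldHom (algebraMap Fq[X] L X) a (g i) (x i)) → ∀ i, l ∣ g i) ∧
      ∃ u : K, u ≠ 0 ∧ drinfeldHom (algebraMap Fq[X] K X) (algebraMap L K a) l u = 0 ∧
        Fintype.card Fq ^ l.natDegree < (minpoly L u).natDegree ^ 2 := by
  obtain ⟨n, hn, hdvd⟩ := exists_ne_zero_forall_not_dvd_imp_dvd_of_drinfeldHom_eq_sum hx
    (finite_setOf_drinfeldHom_eq_sum_of_ne_zero ha x)
  obtain ⟨m, hm⟩ := exists_forall_exists_card_pow_lt_natDegree_minpoly_sq (Fq := Fq) K ha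
  obtain ⟨S, hS⟩ := exists_finset_forall_notMem_not_dvd hn m
  exact ⟨S, fun l hl hi hlS ↦ ⟨hdvd l hl hi (hS l hlS).1, hm l hl hi (hS l hlS).2⟩⟩

end FiniteExtension

/-- **Main theorem of Section 3 (after [Denis, Theorem 5]).**
Let `φ` be a rank one Drinfeld `A`-module over a finite extension `L` of `k = 𝔽_q(T)`
and let `Γ` be a free `A`-submodule of `(L,+)` of rank `r` with basis `{a_1, …, a_r}`.
Then for all but finitely many monic irreducible polynomials `l` of `A`, the elements
`a_1, …, a_r` are linearly independent modulo `φ_l(L)` over `A/lA`, and consequently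
`H_Γ(l) = Gal(L(Λ_l^φ, (1/l)Γ)/L(Λ_l^φ))` is isomorphic as an `A`-module to the direct
product `Λ_l^φ × ⋯ × Λ_l^φ` of `r` copies of `Λ_l^φ` (via `σ ↦ (σ(α_i) - α_i)_i` for
roots `α_i` of `φ_l(u) = a_i`). -/
theorem drinfeld_kummer_full_for_almost_all_primes
    {Fq : Type} [Field Fq] [Fintype Fq]
    (L : IntermediateField (RatFunc Fq) (AlgebraicClosure (RatFunc Fq)))
    [FiniteDimensional (RatFunc Fq) (↥L)]
    (φ : Polynomial Fq →+* AddMonoid.End (AlgebraicClosure (RatFunc Fq)))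
    (hφ : IsDrinfeldRankOne L φ)
    -- Γ : a free A-submodule of (L, +) of rank r with basis a_1, …, a_r
    (Γ : AddSubgroup (AlgebraicClosure (RatFunc Fq)))
    (hΓL : ∀ x ∈ Γ, x ∈ L)
    (hΓA : ∀ (f : Polynomial Fq), ∀ x ∈ Γ, φ f x ∈ Γ)
    (r : ℕ) (a : Fin r → AlgebraicClosure (RatFunc Fq))
    (haΓ : ∀ i, a i ∈ Γ)
    (hgen : ∀ x ∈ Γ, ∃ g : Fin r → Polynomial Fq, x = ∑ i, φ (g i) (a i))
    (hind : ∀ g : Fin r → Polynomial Fq, ∑ i, φ (g i) (a i) = 0 → ∀ i, g i = 0) :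
    ∃ S : Finset (Polynomial Fq),
      ∀ l : Polynomial Fq, l.Monic → Irreducible l → l ∉ S →
        -- (a) a_1, …, a_r are linearly independent modulo φ_l(L) over A/lA
        (∀ g : Fin r → Polynomial Fq,
          (∃ w : AlgebraicClosure (RatFunc Fq), w ∈ L ∧
            φ l w = ∑ i, φ (g i) (a i)) →
          ∀ i, l ∣ g i) ∧
        -- (b) H_Γ(l) ≅ Λ_l^φ × ⋯ × Λ_l^φ (r copies) as A-modules, via
        -- σ ↦ (σ(α_1) - α_1, …, σ(α_r) - α_r)
        (∀ E : IntermediateField (↥L) (AlgebraicClosure (RatFunc Fq)),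
          E = IntermediateField.adjoin (↥L) {x | φ l x ∈ Γ} →
          ∃ α : Fin r → ↥E,
            (∀ i, φ l ((α i : AlgebraicClosure (RatFunc Fq))) = a i) ∧
            -- the map is additive,
            (∀ σ τ : ↥E ≃ₐ[↥L] ↥E,
              (∀ x : ↥E, φ l (x : AlgebraicClosure (RatFunc Fq)) = 0 → σ x = x) →
              (∀ x : ↥E, φ l (x : AlgebraicClosure (RatFunc Fq)) = 0 → τ x = x) →
              ∀ i, ((σ * τ) (α i) : AlgebraicClosure (RatFunc Fq))
                  - (α i : AlgebraicClosure (RatFunc Fq))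
                = ((σ (α i) : AlgebraicClosure (RatFunc Fq))
                    - (α i : AlgebraicClosure (RatFunc Fq)))
                  + ((τ (α i) : AlgebraicClosure (RatFunc Fq))
                    - (α i : AlgebraicClosure (RatFunc Fq)))) ∧
            -- compatible with the A-module structures (the image of H_Γ(l) is stable
            -- under the diagonal Carlitz–Drinfeld action, matching the natural
            -- A-action on H_Γ(l)),
            (∀ (f : Polynomial Fq) (σ : ↥E ≃ₐ[↥L] ↥E),
              (∀ x : ↥E, φ l (x : AlgebraicClosure (RatFunc Fq)) = 0 → σ x = x) →
              ∃ τ : ↥E ≃ₐ[↥L] ↥E,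
                (∀ x : ↥E, φ l (x : AlgebraicClosure (RatFunc Fq)) = 0 → τ x = x) ∧
                ∀ i, (τ (α i) : AlgebraicClosure (RatFunc Fq))
                    - (α i : AlgebraicClosure (RatFunc Fq))
                  = φ f ((σ (α i) : AlgebraicClosure (RatFunc Fq))
                      - (α i : AlgebraicClosure (RatFunc Fq)))) ∧
            -- and a bijection from H_Γ(l) onto Λ_l^φ × ⋯ × Λ_l^φ (r copies)
            Set.BijOn
              (fun σ : ↥E ≃ₐ[↥L] ↥E =>
                fun i => (σ (α i) : AlgebraicClosure (RatFunc Fq))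
                  - (α i : AlgebraicClosure (RatFunc Fq)))
              {σ : ↥E ≃ₐ[↥L] ↥E |
                ∀ x : ↥E, φ l (x : AlgebraicClosure (RatFunc Fq)) = 0 → σ x = x}
              {v : Fin r → AlgebraicClosure (RatFunc Fq) | ∀ i, φ l (v i) = 0}) := by
  obtain ⟨a₀, haL, ha₀, hX, hC⟩ := hφ
  lift a₀ to L using haL
  lift a to Fin r → L using fun i ↦ hΓL _ (haΓ i)
  set K := AlgebraicClosure (RatFunc Fq)
  set t := algebraMap Fq[X] L X
  have : IsScalarTower Fq L K := .of_algebraMap_eq fun _ ↦ rfl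
  have : IsScalarTower Fq Fq[X] L := .to₁₂₄ Fq Fq[X] (RatFunc Fq) L
  have : FaithfulSMul Fq[X] L := .trans Fq[X] (RatFunc Fq) L
  have hφ : ∀ f x, φ f x = drinfeldHom (algebraMap L K t) (algebraMap L K a₀) f x :=
    eq_drinfeldHom_of_apply_X_of_apply_C (fun x ↦ by rw [hX, ← RatFunc.algebraMap_X]; rfl) hC
  simp only [hφ] at *
  obtain ⟨S, hS⟩ := exists_finset_forall_notMem_dvd_and_card_pow_lt K (ne_of_apply_ne _ ha₀)
    fun g hg ↦ hind g ((algebraMap_sum_drinfeldHom ..).symm.trans (by rw [hg, map_zero]))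
  refine ⟨S, fun l hl hi hlS ↦ ?_⟩
  obtain ⟨hdvd, u, hu0, hu, hcard⟩ := hS l hl hi hlS
  refine ⟨fun g ⟨w, hwL, hw⟩ ↦ hdvd g ⟨⟨w, hwL⟩, (algebraMap L K).injective <|
    (algebraMap_drinfeldHom ..).trans (hw.trans (algebraMap_sum_drinfeldHom ..).symm)⟩,
    fun E hE ↦ ?_⟩
  have hlt : aeval t l ≠ 0 := aeval_algebraMap_X_ne_zero hl.ne_zero
  choose α hα using fun i ↦ exists_drinfeldHom_eq_of_eq_adjoin hlt hE (haΓ i)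
  have hbij := bijOn_galois_apply_sub hl hi hlt hu0 hu hcard (fun y hy ↦ ⟨⟨y, hΓL y hy⟩, rfl⟩) hgen
    hdvd hE hα
  refine ⟨α, hα, fun σ τ hσ _ i ↦ mul_apply_sub_of_forall_torsion hσ (hα i) τ,
    fun f σ hσ ↦ ?_, hbij⟩
  obtain ⟨τ, hτ, hτα⟩ := hbij.surjOn fun i ↦ drinfeldHom_drinfeldHom_eq_zero (hbij.mapsTo hσ i) f
  exact ⟨τ, hτ, congrFun hτα⟩
end
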